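/- Let K be a Hilbert space, let K₀ : K → L²(ℝⁿ) be a bounded everywhere defined operator with ran K₀ ⊂ H^{3/2}(ℝⁿ), and let α ∈ L^∞(ℝⁿ). If α has compact support, or if n > 3 and α ∈ L^{2n/3}(ℝⁿ), then α K₀ belongs to the weak Schatten–von Neumann class S_{2n/3,∞}. -/

import Mathlib

open MeasureTheory Filter Topology

noncomputable section

namespace RobinHS

/-- The boundary `ℝⁿ`, modelled as Euclidean space. -/
abbrev Bdy (n : ℕ) := EuclideanSpace ℝ (Fin n)

/-- The ambient space `ℝⁿ × ℝ ≅ ℝ^{n+1}`. -/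
abbrev Amb (n : ℕ) := Bdy n × ℝ

/-- The open upper half-space `ℝ^{n+1}_+`. -/
def half (n : ℕ) : Set (Amb n) := {x | 0 < x.2}

/-- Lebesgue measure restricted to the half-space. -/
abbrev μplus (n : ℕ) : Measure (Amb n) := volume.restrict (half n)

/-- `L²(ℝ^{n+1}_+)`. -/
abbrev Hplus (n : ℕ) := Lp ℂ 2 (μplus n)

/-- `L²(ℝⁿ)`. -/
abbrev Hbd (n : ℕ) := Lp ℂ 2 (volume : Measure (Bdy n))

/-- The coordinate directions of `ℝ^{n+1}`. -/
def dirs (n : ℕ) (i : Fin (n + 1)) : Amb n :=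
  if h : (i : ℕ) < n then (EuclideanSpace.single ⟨i, h⟩ (1 : ℝ), 0) else (0, 1)

/-- Real-valued test functions compactly supported in `U`. -/
def IsTest (n : ℕ) (U : Set (Amb n)) (φ : Amb n → ℝ) : Prop :=
  ContDiff ℝ (⊤ : ℕ∞) φ ∧ HasCompactSupport φ ∧ tsupport φ ⊆ U

/-- Complex-valued test functions compactly supported in `U`. -/
def IsTestC (n : ℕ) (U : Set (Amb n)) (φ : Amb n → ℂ) : Prop :=
  ContDiff ℝ (⊤ : ℕ∞) φ ∧ HasCompactSupport φ ∧ tsupport φ ⊆ U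

/-- `g` is the weak (distributional) derivative of `f` in direction `v` on `U`. -/
def IsWeakDeriv (n : ℕ) (U : Set (Amb n)) (v : Amb n) (f g : Amb n → ℂ) : Prop :=
  ∀ φ : Amb n → ℝ, IsTest n U φ →
    ∫ x in U, f x * ((fderiv ℝ φ x) v : ℂ) = - ∫ x in U, g x * (φ x : ℂ)

def MemL2 (n : ℕ) (U : Set (Amb n)) (f : Amb n → ℂ) : Prop :=
  MemLp f 2 (volume.restrict U)

/-- The Sobolev space `H¹(U)`. -/
def MemH1 (n : ℕ) (U : Set (Amb n)) (f : Amb n → ℂ) : Prop :=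
  MemL2 n U f ∧ ∀ i : Fin (n + 1), ∃ g, IsWeakDeriv n U (dirs n i) f g ∧ MemL2 n U g

/-- The Sobolev space `H²(U)`. -/
def MemH2 (n : ℕ) (U : Set (Amb n)) (f : Amb n → ℂ) : Prop :=
  MemL2 n U f ∧ ∀ i : Fin (n + 1), ∃ g, IsWeakDeriv n U (dirs n i) f g ∧ MemL2 n U g ∧
    ∀ j : Fin (n + 1), ∃ h, IsWeakDeriv n U (dirs n j) g h ∧ MemL2 n U h

/-- Finiteness of the Gagliardo seminorm of order `1/2` on `U ⊆ ℝ^{n+1}`. -/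
def Gag12 (n : ℕ) (U : Set (Amb n)) (g : Amb n → ℂ) : Prop :=
  Integrable (fun p : Amb n × Amb n => ‖g p.1 - g p.2‖ ^ 2 / ‖p.1 - p.2‖ ^ ((n : ℝ) + 2))
    ((volume.restrict U).prod (volume.restrict U))

/-- The fractional Sobolev space `H^{3/2}(U)` (Sobolev–Slobodeckij description). -/
def MemH32 (n : ℕ) (U : Set (Amb n)) (f : Amb n → ℂ) : Prop :=
  MemL2 n U f ∧ ∀ i : Fin (n + 1), ∃ g, IsWeakDeriv n U (dirs n i) f g ∧ MemL2 n U g ∧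
    Gag12 n U g

/-- The classical Laplacian of a test function. -/
def lapl (n : ℕ) (φ : Amb n → ℝ) (x : Amb n) : ℝ :=
  ∑ i : Fin (n + 1), fderiv ℝ (fun y => fderiv ℝ φ y (dirs n i)) x (dirs n i)

/-- `g = -Δ f` in the weak (distributional) sense on `U`. -/
def IsNegLap (n : ℕ) (U : Set (Amb n)) (f g : Amb n → ℂ) : Prop :=
  ∀ φ : Amb n → ℝ, IsTest n U φ →
    ∫ x in U, f x * (lapl n φ x : ℂ) = - ∫ x in U, g x * (φ x : ℂ)

/-- `b` is the Dirichlet boundary trace `f|_{ℝⁿ}` of `f` (as an `L²(ℝⁿ)` limit). -/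
def HasDTrace (n : ℕ) (f : Amb n → ℂ) (b : Bdy n → ℂ) : Prop :=
  Tendsto (fun t : ℝ => ∫ y : Bdy n, ‖f (y, t) - b y‖ ^ 2) (𝓝[>] (0 : ℝ)) (𝓝 (0 : ℝ))

/-- `b = ∂_ν f|_{ℝⁿ}` is the trace of the normal derivative of `f`, the normal pointing
outwards of the half-space (i.e. downwards). -/
def HasNTrace (n : ℕ) (f : Amb n → ℂ) (b : Bdy n → ℂ) : Prop :=
  ∃ f', IsWeakDeriv n (half n) ((0 : Bdy n), (1 : ℝ)) f f' ∧ HasDTrace n f' (fun y => - b y)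

/-- The Sobolev space `H²₀(ℝ^{n+1}_+)`: `H²`-functions approximable in the `H²`-norm by
smooth functions compactly supported in the open half-space. -/
def MemH20 (n : ℕ) (f : Amb n → ℂ) : Prop :=
  MemH2 n (half n) f ∧
  ∀ ε : ℝ, 0 < ε → ∃ φ : Amb n → ℂ, IsTestC n (half n) φ ∧
    (∫ x in half n, ‖f x - φ x‖ ^ 2) < ε ∧
    (∀ i : Fin (n + 1), ∀ g, IsWeakDeriv n (half n) (dirs n i) f g →
      (∫ x in half n, ‖g x - (fderiv ℝ φ x) (dirs n i)‖ ^ 2) < ε) ∧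
    (∀ i j : Fin (n + 1), ∀ g h, IsWeakDeriv n (half n) (dirs n i) f g →
      IsWeakDeriv n (half n) (dirs n j) g h →
      (∫ x in half n, ‖h x - (fderiv ℝ (fun y => (fderiv ℝ φ y) (dirs n i)) x) (dirs n j)‖ ^ 2) < ε)

/-- Membership in the domain of the Robin Laplacian `A_α`:
`f ∈ H²(ℝ^{n+1}_+)` with `∂_ν f|_{ℝⁿ} = α f|_{ℝⁿ}`. -/
def RobinDom (n : ℕ) (α : Bdy n → ℂ) (f : Amb n → ℂ) : Prop :=
  MemH2 n (half n) f ∧ ∃ b : Bdy n → ℂ, HasDTrace n f b ∧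
    HasNTrace n f (fun y => α y * b y)

/-- The graph relation of the Robin Laplacian `A_α` in `L²(ℝ^{n+1}_+)`: `w = A_α u`. -/
def RobinRel (n : ℕ) (α : Bdy n → ℂ) (u w : Hplus n) : Prop :=
  ∃ f g : Amb n → ℂ, ⇑u =ᵐ[μplus n] f ∧ ⇑w =ᵐ[μplus n] g ∧
    RobinDom n α f ∧ IsNegLap n (half n) f g

/-- The graph relation of the Neumann Laplacian `A_N` in `L²(ℝ^{n+1}_+)`. -/
def NeuRel (n : ℕ) (u w : Hplus n) : Prop :=
  ∃ f g : Amb n → ℂ, ⇑u =ᵐ[μplus n] f ∧ ⇑w =ᵐ[μplus n] g ∧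
    MemH2 n (half n) f ∧ HasNTrace n f (fun _ => 0) ∧ IsNegLap n (half n) f g

/-- Membership in `H^{3/2}_Δ(ℝ^{n+1}_+) = {f ∈ H^{3/2} : Δf ∈ L²}`. -/
def TDom (n : ℕ) (f : Amb n → ℂ) : Prop :=
  MemH32 n (half n) f ∧ ∃ L, IsNegLap n (half n) f L ∧ MemL2 n (half n) L

/-- The graph relation of the operator `T = -Δ` on `H^{3/2}_Δ(ℝ^{n+1}_+)`. -/
def TRel (n : ℕ) (u w : Hplus n) : Prop :=
  ∃ f g : Amb n → ℂ, ⇑u =ᵐ[μplus n] f ∧ ⇑w =ᵐ[μplus n] g ∧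
    TDom n f ∧ IsNegLap n (half n) f g

/-- The graph relation of `T` restricted to `ker Γ₀` (vanishing Neumann trace). -/
def TNeuRel (n : ℕ) (u w : Hplus n) : Prop :=
  ∃ f g : Amb n → ℂ, ⇑u =ᵐ[μplus n] f ∧ ⇑w =ᵐ[μplus n] g ∧
    TDom n f ∧ HasNTrace n f (fun _ => 0) ∧ IsNegLap n (half n) f g

/-- The graph relation of the minimal operator `A = -Δ` on `H²₀(ℝ^{n+1}_+)`. -/
def MinRel (n : ℕ) (u w : Hplus n) : Prop :=
  ∃ f g : Amb n → ℂ, ⇑u =ᵐ[μplus n] f ∧ ⇑w =ᵐ[μplus n] g ∧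
    MemH20 n f ∧ IsNegLap n (half n) f g

/-- `f ∈ ker (T - λ)`. -/
def EigSol (n : ℕ) (lam : ℂ) (f : Amb n → ℂ) : Prop :=
  TDom n f ∧ IsNegLap n (half n) f (fun x => lam * f x)

/-- `α ∈ W^{1,∞}(ℝⁿ)`: bounded with bounded (weak) first-order derivatives,
equivalently bounded and Lipschitz. -/
def IsW1inf (n : ℕ) (α : Bdy n → ℂ) : Prop :=
  (∃ C : ℝ, ∀ x, ‖α x‖ ≤ C) ∧ ∃ L : NNReal, LipschitzWith L α

/-- `‖α‖_∞ = sup_x |α(x)|`. -/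
def supNorm (n : ℕ) (α : Bdy n → ℂ) : ℝ := ⨆ x, ‖α x‖

/-- `γ` is the Poisson operator `γ(λ)` (the `γ`-field): it maps the Neumann trace
`∂_ν f_λ|_{ℝⁿ}` of `f_λ ∈ ker(T - λ)` to `f_λ`. -/
def IsPoissonOp (n : ℕ) (lam : ℂ) (γ : Hbd n →L[ℂ] Hplus n) : Prop :=
  ∀ (Φ : Hbd n) (a : Bdy n → ℂ) (f : Amb n → ℂ),
    ⇑Φ =ᵐ[(volume : Measure (Bdy n))] a → EigSol n lam f → HasNTrace n f a →
      ⇑(γ Φ) =ᵐ[μplus n] f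

/-- `M` is the Neumann-to-Dirichlet map `M(λ)` (the Weyl function): it maps the Neumann
trace of `f_λ ∈ ker(T - λ)` to its Dirichlet trace. -/
def IsNDMap (n : ℕ) (lam : ℂ) (M : Hbd n →L[ℂ] Hbd n) : Prop :=
  ∀ (Φ : Hbd n) (a b : Bdy n → ℂ) (f : Amb n → ℂ),
    ⇑Φ =ᵐ[(volume : Measure (Bdy n))] a → EigSol n lam f → HasNTrace n f a →
      HasDTrace n f b → ⇑(M Φ) =ᵐ[(volume : Measure (Bdy n))] b

/-- `M` is the bounded multiplication operator by `α` in `L²(ℝⁿ)`. -/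
def IsMultOp (n : ℕ) (α : Bdy n → ℂ) (M : Hbd n →L[ℂ] Hbd n) : Prop :=
  ∀ u : Hbd n, ⇑(M u) =ᵐ[(volume : Measure (Bdy n))] fun y => α y * u y

/-! Sobolev spaces on the boundary `ℝⁿ`. -/

def bdirs (n : ℕ) (i : Fin n) : Bdy n := EuclideanSpace.single i (1 : ℝ)

def IsTestB (n : ℕ) (φ : Bdy n → ℝ) : Prop := ContDiff ℝ (⊤ : ℕ∞) φ ∧ HasCompactSupport φ

def IsWeakDerivB (n : ℕ) (v : Bdy n) (f g : Bdy n → ℂ) : Prop :=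
  ∀ φ : Bdy n → ℝ, IsTestB n φ →
    ∫ y, f y * ((fderiv ℝ φ y) v : ℂ) = - ∫ y, g y * (φ y : ℂ)

/-- Finiteness of the Gagliardo seminorm of order `1/2` on `ℝⁿ`. -/
def GagB (n : ℕ) (g : Bdy n → ℂ) : Prop :=
  Integrable (fun p : Bdy n × Bdy n => ‖g p.1 - g p.2‖ ^ 2 / ‖p.1 - p.2‖ ^ ((n : ℝ) + 1))
    ((volume : Measure (Bdy n)).prod (volume : Measure (Bdy n)))

/-- The fractional Sobolev space `H^{3/2}(ℝⁿ)`. -/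
def MemH32B (n : ℕ) (f : Bdy n → ℂ) : Prop :=
  MemLp f 2 (volume : Measure (Bdy n)) ∧
  ∀ i : Fin n, ∃ g, IsWeakDerivB n (bdirs n i) f g ∧
    MemLp g 2 (volume : Measure (Bdy n)) ∧ GagB n g

/-! Abstract notions for (graph relations of) unbounded operators in Hilbert spaces,
Schatten–von Neumann classes, groups, spectra. -/

section Abstract

variable {H G : Type*} [NormedAddCommGroup H] [InnerProductSpace ℂ H] [CompleteSpace H]
  [NormedAddCommGroup G] [InnerProductSpace ℂ G] [CompleteSpace G]

/-- `R` is the (bounded, everywhere defined, two-sided) resolvent of the operator with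
graph relation `Rel` at the point `lam`. -/
def RelResolventAt (Rel : H → H → Prop) (lam : ℂ) (R : H →L[ℂ] H) : Prop :=
  (∀ u : H, Rel (R u) (u + lam • R u)) ∧
  (∀ u w : H, Rel u w → R (w - lam • u) = u)

/-- `lam` belongs to the resolvent set of the operator with graph relation `Rel`. -/
def RelInResolvent (Rel : H → H → Prop) (lam : ℂ) : Prop :=
  ∃ R : H →L[ℂ] H, RelResolventAt Rel lam R

/-- The graph relation of the adjoint operator. -/
def AdjRel (Rel : H → H → Prop) (u w : H) : Prop :=
  ∀ f g : H, Rel f g → (inner ℂ g u : ℂ) = (inner ℂ f w : ℂ)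

/-- Symmetry of the operator with graph relation `Rel`. -/
def IsSymmRel (Rel : H → H → Prop) : Prop :=
  ∀ u w f g : H, Rel u w → Rel f g → (inner ℂ w f : ℂ) = (inner ℂ u g : ℂ)

/-- Selfadjointness of the operator with graph relation `Rel`. -/
def IsSelfAdjRel (Rel : H → H → Prop) : Prop :=
  ∀ u w : H, Rel u w ↔ AdjRel Rel u w

/-- The operator with graph relation `Rel`, shifted by `lam`, is semi-Fredholm:
closed range, and finite-dimensional kernel or finite-codimensional range. -/
def SemiFredholmAt (Rel : H → H → Prop) (lam : ℂ) : Prop :=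
  IsClosed {v : H | ∃ u w, Rel u w ∧ v = w - lam • u} ∧
  ((∃ t : Finset H, {u : H | Rel u (lam • u)} ⊆ (Submodule.span ℂ (t : Set H) : Set H)) ∨
   (∃ t : Finset H,
      Submodule.span ℂ ((t : Set H) ∪ {v : H | ∃ u w, Rel u w ∧ v = w - lam • u}) = ⊤))

/-- The essential spectrum: points where the operator is not semi-Fredholm. -/
def EssSpec (Rel : H → H → Prop) : Set ℂ := {lam | ¬ SemiFredholmAt Rel lam}

/-- The `k`-th approximation number (`= (k+1)`-th singular value) of a bounded operator
between Hilbert spaces: the distance to operators of rank at most `k`. -/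
def sNum (T : H →L[ℂ] G) (k : ℕ) : ℝ :=
  ⨅ F : {F : H →L[ℂ] G // LinearMap.rank F.toLinearMap ≤ (k : Cardinal)}, ‖T - (F : H →L[ℂ] G)‖

/-- Membership in the Schatten–von Neumann ideal `S_p`: the singular values are
`p`-summable. -/
def MemSchatten (p : ℝ) (T : H →L[ℂ] G) : Prop :=
  IsCompactOperator ⇑T ∧ Summable (fun k : ℕ => sNum T k ^ p)

/-- Membership in the weak Schatten–von Neumann ideal `S_{p,∞}`:
`s_k(T) = O(k^{-1/p})`. -/
def MemWeakSchatten (p : ℝ) (T : H →L[ℂ] G) : Prop :=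
  IsCompactOperator ⇑T ∧ ∃ C : ℝ, ∀ k : ℕ, sNum T k ≤ C * ((k : ℝ) + 1) ^ (-(1 / p))

/-- `U` is the strongly continuous unitary group `t ↦ e^{-itA}` generated by the
selfadjoint operator `A` with graph relation `Rel`. -/
def IsUnitaryGroupFor (Rel : H → H → Prop) (U : ℝ → (H →L[ℂ] H)) : Prop :=
  U 0 = 1 ∧ (∀ s t : ℝ, U (s + t) = (U s).comp (U t)) ∧
  (∀ (t : ℝ) (f : H), ‖U t f‖ = ‖f‖) ∧
  (∀ f : H, Continuous fun t : ℝ => U t f) ∧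
  (∀ u w : H, Rel u w → ∀ t : ℝ, HasDerivAt (fun s : ℝ => U s u) ((-Complex.I) • (U t w)) t)

/-- `f` belongs to the absolutely continuous subspace of the selfadjoint operator
generating the unitary group `U`: its spectral measure `μ_f`, whose Fourier–Stieltjes
transform is `t ↦ ⟪f, U(t) f⟫`, has an integrable density w.r.t. Lebesgue measure. -/
def InAc (U : ℝ → (H →L[ℂ] H)) (f : H) : Prop :=
  ∃ h : ℝ → ℝ, Integrable h ∧ (∀ x, 0 ≤ h x) ∧
    ∀ t : ℝ, (inner ℂ f (U t f) : ℂ) = ∫ x : ℝ, Complex.exp ((-Complex.I) * t * x) * (h x : ℂ)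

/-- `lam` is in the resolvent set of the absolutely continuous part (the restriction to
the absolutely continuous subspace) of the operator with graph relation `Rel`. -/
def AcResolventAt (Rel : H → H → Prop) (U : ℝ → (H →L[ℂ] H)) (lam : ℂ) : Prop :=
  ∃ R : H →L[ℂ] H,
    (∀ f : H, InAc U f → InAc U (R f) ∧ Rel (R f) (f + lam • R f)) ∧
    (∀ u w : H, Rel u w → InAc U u → R (w - lam • u) = u)

/-- `W` is a complete wave operator for the pair of unitary groups `U₁`, `U₂` along the
filter `l` (`atTop` for `W₊`, `atBot` for `W₋`): the strong limits
`lim U₂(t)* U₁(t) f` exist on the absolutely continuous subspace of the first operator,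
`W` is isometric there, and its range is the absolutely continuous subspace of the
second operator. -/
def WaveProps (U₁ U₂ : ℝ → (H →L[ℂ] H)) (l : Filter ℝ) (W : H →L[ℂ] H) : Prop :=
  (∀ f : H, InAc U₁ f → Tendsto (fun t : ℝ => U₂ (-t) (U₁ t f)) l (𝓝 (W f))) ∧
  (∀ f : H, InAc U₁ f → ‖W f‖ = ‖f‖ ∧ InAc U₂ (W f)) ∧
  (∀ g : H, InAc U₂ g → ∃ f : H, InAc U₁ f ∧ W f = g)

/-- `V` implements a unitary equivalence between the absolutely continuous parts of the
operators generating `U₁` and `U₂`. -/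
def AcUnitEquiv (U₁ U₂ : ℝ → (H →L[ℂ] H)) (V : H →L[ℂ] H) : Prop :=
  (∀ f : H, InAc U₁ f → ‖V f‖ = ‖f‖ ∧ InAc U₂ (V f)) ∧
  (∀ g : H, InAc U₂ g → ∃ f : H, InAc U₁ f ∧ V f = g) ∧
  (∀ (t : ℝ) (f : H), InAc U₁ f → V (U₁ t f) = U₂ t (V f))

/-- The spectrum of the operator with graph relation `Rel`. -/
def SpecOf (Rel : H → H → Prop) : Set ℂ := {lam | ¬ RelInResolvent Rel lam}

/-- `u` is a generalized eigenvector (root vector) at `lam`: `(A - lam)^k u = 0`. -/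
def RootVec (Rel : H → H → Prop) (lam : ℂ) (u : H) : Prop :=
  ∃ (k : ℕ) (c : ℕ → H), c 0 = u ∧ c k = 0 ∧
    ∀ j, j < k → ∃ w, Rel (c j) w ∧ c (j + 1) = w - lam • c j

/-- The algebraic multiplicity of `lam`: the dimension of the space of root vectors,
expressed as the least cardinality of a finite spanning set. -/
def AlgMult (Rel : H → H → Prop) (lam : ℂ) : ℕ :=
  sInf {k : ℕ | ∃ t : Finset H, t.card = k ∧
    {u : H | RootVec Rel lam u} ⊆ (Submodule.span ℂ (t : Set H) : Set H)}

/-- The discrete spectrum: isolated eigenvalues of finite algebraic multiplicity. -/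
def DiscSpec (Rel : H → H → Prop) : Set ℂ :=
  {lam | lam ∈ SpecOf Rel ∧
    (∃ ε : ℝ, 0 < ε ∧ ∀ z ∈ SpecOf Rel, dist z lam < ε → z = lam) ∧
    (∃ u : H, u ≠ 0 ∧ Rel u (lam • u)) ∧
    ∃ t : Finset H, {u : H | RootVec Rel lam u} ⊆ (Submodule.span ℂ (t : Set H) : Set H)}

end Abstract

end RobinHS

namespace RobinHS

/-!
Let `P_k` be the orthogonal projection of `L²(ℝⁿ)` onto the functions that are affine on each dyadic
cube of side `2⁻ᵏ`. A Taylor expansion with the Gagliardo seminorm of the gradient as remainder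
gives `∑ₖ 8ᵏ ‖f - P_k f‖² < ∞` for every `f` in `H^{3/2}`, and the uniform boundedness principle
turns this into `∑ₖ 8ᵏ ‖(1 - P_k) K₀ u‖² ≤ C² ‖u‖²`.

If `α` is bounded with compact support, then `α P_k K₀` has rank `O(2ⁿᵏ)` and lies within
`O(2^{-3k/2})` of `α K₀` in norm, so `s_m(α K₀) = O(m^{-3/(2n)})`.

If `α ∈ L^p` with `p = 2n/3 > 2`, let `A u (x) = α(x) (P_{k(x)} K₀ u)(x)` where `|α(x)| > t`, with
the level `k(x)` chosen so that `8^{k(x)/2}` is comparable to `|α(x)| / t`, and `A u (x) = 0`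
elsewhere. Then `‖α K₀ - A‖ = O(t)`. The functional `u ↦ (P_k K₀ u)(x)` changes by
`O(2^{k(n-3)/2})` in norm from level `k` to level `k + 1`; as `n > 3` these increments grow
geometrically, so the functional itself has that norm and `A` is Hilbert–Schmidt with squared norm
`O(t^{2-p} ∫ |α|^p)`. Taking `t = m^{-1/p}` gives `s_m(α K₀) = O(m^{-1/p})`.
-/

section ApproximationNumbers

variable {H G : Type*} [NormedAddCommGroup H] [InnerProductSpace ℂ H] [NormedAddCommGroup G]
  [InnerProductSpace ℂ G]

lemma sNum_le_norm_sub {T F : H →L[ℂ] G} {k : ℕ} (hF : F.toLinearMap.rank ≤ (k : Cardinal)) :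
    sNum T k ≤ ‖T - F‖ :=
  ciInf_le ⟨0, by rintro _ ⟨F, rfl⟩; exact norm_nonneg _⟩
    (⟨F, hF⟩ : {F : H →L[ℂ] G // F.toLinearMap.rank ≤ (k : Cardinal)})

lemma sNum_le_norm (T : H →L[ℂ] G) (k : ℕ) : sNum T k ≤ ‖T‖ := by
  simpa using sNum_le_norm_sub (T := T) (F := 0) (k := k) (by simp)

lemma exists_rank_le_norm_sub_lt {T : H →L[ℂ] G} {k : ℕ} {a : ℝ} (h : sNum T k < a) :
    ∃ F : H →L[ℂ] G, F.toLinearMap.rank ≤ (k : Cardinal) ∧ ‖T - F‖ < a := by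
  have : Nonempty {F : H →L[ℂ] G // F.toLinearMap.rank ≤ (k : Cardinal)} := ⟨⟨0, by simp⟩⟩
  obtain ⟨F, hF⟩ := exists_lt_of_ciInf_lt h
  exact ⟨F.1, F.2, hF⟩

lemma isCompactOperator_of_rank_le {F : H →L[ℂ] G} {k : ℕ}
    (hF : F.toLinearMap.rank ≤ (k : Cardinal)) : IsCompactOperator F := by
  have hfin : FiniteDimensional ℂ F.toLinearMap.range := by
    rw [FiniteDimensional, ← Module.rank_lt_aleph0_iff]
    exact hF.trans_lt Cardinal.natCast_lt_aleph0
  have : ProperSpace F.toLinearMap.range := FiniteDimensional.proper ℂ _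
  exact (isCompactOperator_of_locallyCompactSpace_rng F.toLinearMap.range.subtypeL).comp_clm
    (F.codRestrict _ fun x ↦ LinearMap.mem_range_self _ x)

lemma isCompactOperator_of_tendsto_sNum [CompleteSpace G] {T : H →L[ℂ] G}
    (hT : Tendsto (sNum T) atTop (𝓝 0)) : IsCompactOperator T := by
  have happrox (k : ℕ) := exists_rank_le_norm_sub_lt
    (lt_add_of_pos_right (sNum T k) (Nat.one_div_pos_of_nat (α := ℝ) (n := k)))
  choose F hrank hnorm using happrox
  refine isCompactOperator_of_tendsto (l := atTop) (F := F) ?_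
    (.of_forall fun k ↦ isCompactOperator_of_rank_le (hrank k))
  rw [tendsto_iff_norm_sub_tendsto_zero]
  have hlim := hT.add (tendsto_one_div_add_atTop_nhds_zero_nat (𝕜 := ℝ))
  rw [add_zero] at hlim
  exact squeeze_zero (fun _ ↦ norm_nonneg _) (fun k ↦ norm_sub_rev T (F k) ▸ (hnorm k).le) hlim

lemma memWeakSchatten_of_sNum_le [CompleteSpace G] {T : H →L[ℂ] G} {p C : ℝ} (hp : 0 < p)
    (h : ∀ k : ℕ, sNum T k ≤ C * ((k : ℝ) + 1) ^ (-(1 / p))) : MemWeakSchatten p T := by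
  refine ⟨isCompactOperator_of_tendsto_sNum ?_, C, h⟩
  have hatTop : Tendsto (fun k : ℕ ↦ (k : ℝ) + 1) atTop atTop :=
    tendsto_atTop_add_const_right _ _ tendsto_natCast_atTop_atTop
  have hlim := ((tendsto_rpow_neg_atTop (one_div_pos.2 hp)).comp hatTop).const_mul C
  rw [mul_zero] at hlim
  exact squeeze_zero (fun k ↦ Real.iInf_nonneg fun F ↦ norm_nonneg _) h hlim

lemma exists_sNum_le_rpow_of_geometric {T : H →L[ℂ] G} {c N : ℕ} {M s : ℝ} (hc : 0 < c)
    (hN : 1 < N) (hs : 0 ≤ s)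
    (h : ∀ k : ℕ, ∃ F : H →L[ℂ] G, F.toLinearMap.rank ≤ ((c * N ^ k : ℕ) : Cardinal) ∧
      ‖T - F‖ ≤ M * ((N : ℝ) ^ k) ^ (-s)) :
    ∃ C : ℝ, ∀ m : ℕ, sNum T m ≤ C * ((m : ℝ) + 1) ^ (-s) := by
  have : (0 : ℝ) < N := by exact_mod_cast zero_lt_one.trans hN
  have hM : 0 ≤ M := by
    obtain ⟨F, -, hF⟩ := h 0
    simpa using (norm_nonneg _).trans hF
  have hweight (x : ℝ) (hx : 0 < x) (m : ℕ) (hm : (m : ℝ) + 1 ≤ c * N * x) :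
      x ^ (-s) ≤ (c * N : ℝ) ^ s * ((m : ℝ) + 1) ^ (-s) := by
    rw [Real.rpow_neg hx.le, Real.rpow_neg (by positivity), ← div_eq_mul_inv,
      le_div_iff₀ (by positivity), inv_mul_le_iff₀ (by positivity), mul_comm (x ^ s),
      ← Real.mul_rpow (by positivity) hx.le]
    exact Real.rpow_le_rpow (by positivity) hm hs
  refine ⟨(‖T‖ + M) * (c * N : ℝ) ^ s, fun m ↦ ?_⟩
  suffices ∃ x : ℝ, 0 < x ∧ (m : ℝ) + 1 ≤ c * N * x ∧ sNum T m ≤ (‖T‖ + M) * x ^ (-s) by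
    obtain ⟨x, hx, hm, hle⟩ := this
    rw [mul_assoc]
    exact hle.trans (mul_le_mul_of_nonneg_left (hweight x hx m hm) (by positivity))
  rcases lt_or_ge m c with hmc | hcm
  · refine ⟨1, one_pos, ?_, ?_⟩
    · exact_mod_cast (Nat.succ_le_of_lt hmc).trans (by nlinarith)
    · simpa using (sNum_le_norm T m).trans (le_add_of_nonneg_right hM)
  · set k := Nat.log N (m / c)
    have hlower : c * N ^ k ≤ m := by
      have := Nat.pow_log_le_self N (Nat.div_pos hcm hc).ne'
      rwa [Nat.le_div_iff_mul_le hc, mul_comm] at this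
    have hupper : m + 1 ≤ c * N * N ^ k := by
      have := Nat.lt_pow_succ_log_self hN (m / c)
      rw [Nat.div_lt_iff_lt_mul hc, Nat.pow_succ] at this
      linarith
    obtain ⟨F, hrank, hnorm⟩ := h k
    refine ⟨(N : ℝ) ^ k, by positivity, by exact_mod_cast hupper, ?_⟩
    calc sNum T m ≤ ‖T - F‖ := sNum_le_norm_sub (hrank.trans (by exact_mod_cast hlower))
      _ ≤ M * ((N : ℝ) ^ k) ^ (-s) := hnorm
      _ ≤ (‖T‖ + M) * ((N : ℝ) ^ k) ^ (-s) := by gcongr; exact le_add_of_nonneg_left (norm_nonneg T)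

/-- `A` is a Hilbert–Schmidt operator with squared Hilbert–Schmidt norm at most `S`. Testing on
finite orthonormal families avoids the choice of an orthonormal basis. -/
def HilbertSchmidtSqLE (A : H →L[ℂ] G) (S : ℝ) : Prop :=
  ∀ ⦃m : ℕ⦄ (v : Fin m → H), Orthonormal ℂ v → ∑ j, ‖A (v j)‖ ^ 2 ≤ S

namespace HilbertSchmidtSqLE

variable {A : H →L[ℂ] G} {S : ℝ}

lemma nonneg (hA : HilbertSchmidtSqLE A S) : 0 ≤ S := by
  simpa using hA (m := 0) Fin.elim0 (.of_isEmpty _)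

lemma card_le (hA : HilbertSchmidtSqLE A S) {k m : ℕ} {v : Fin m → H} (hv : Orthonormal ℂ v)
    (hlarge : ∀ j, √(S / (k + 1)) < ‖A (v j)‖) : m ≤ k := by
  by_contra! hkm
  have hsum : ∑ _j : Fin m, S / (k + 1) < ∑ j, ‖A (v j)‖ ^ 2 :=
    Finset.sum_lt_sum_of_nonempty ⟨⟨0, by omega⟩, Finset.mem_univ _⟩ fun j _ ↦
      (Real.sqrt_lt' ((Real.sqrt_nonneg _).trans_lt (hlarge j))).1 (hlarge j)
  have hle : S ≤ m * (S / (k + 1)) := by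
    have hkm' : (k : ℝ) + 1 ≤ m := by exact_mod_cast hkm
    have hS := hA.nonneg
    calc S = (k + 1) * (S / (k + 1)) := by field_simp
      _ ≤ m * (S / (k + 1)) := by gcongr
  rw [Fin.sum_const, nsmul_eq_mul] at hsum
  exact (hle.trans_lt (hsum.trans_le (hA v hv))).false

end HilbertSchmidtSqLE

lemma exists_maximal_orthonormal_lt_norm (A : H →L[ℂ] G) (a : ℝ) {k : ℕ}
    (hcard : ∀ m (v : Fin m → H), Orthonormal ℂ v → (∀ j, a < ‖A (v j)‖) → m ≤ k) :
    ∃ m ≤ k, ∃ v : Fin m → H, Orthonormal ℂ v ∧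
      ∀ e : H, ‖e‖ = 1 → (∀ j, inner ℂ e (v j) = 0) → ‖A e‖ ≤ a := by
  let admissible (m : ℕ) : Prop := ∃ v : Fin m → H, Orthonormal ℂ v ∧ ∀ j, a < ‖A (v j)‖
  obtain ⟨m, ⟨v, hv, hlarge⟩, hmax⟩ : ∃ m, admissible m ∧ ¬ admissible (m + 1) := by
    by_contra! hstep
    have hall (m : ℕ) : admissible m :=
      Nat.rec ⟨Fin.elim0, .of_isEmpty _, fun j ↦ j.elim0⟩ hstep m
    obtain ⟨v, hv, hlarge⟩ := hall (k + 1)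
    exact (hcard _ v hv hlarge).not_gt k.lt_succ_self
  refine ⟨m, hcard m v hv hlarge, v, hv, fun e he horth ↦ ?_⟩
  by_contra! hlt
  refine hmax ⟨Matrix.vecCons e v, orthonormal_vecCons_iff.2 ⟨he, horth, hv⟩, fun j ↦ ?_⟩
  cases j using Fin.cases with
  | zero => simpa using hlt
  | succ j => simpa using hlarge j

lemma norm_sub_comp_starProjection_le {A : H →L[ℂ] G} {a : ℝ} (ha : 0 ≤ a) (V : Submodule ℂ H)
    [V.HasOrthogonalProjection] (h : ∀ e ∈ Vᗮ, ‖e‖ = 1 → ‖A e‖ ≤ a) :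
    ‖A - A ∘L V.starProjection‖ ≤ a := by
  refine ContinuousLinearMap.opNorm_le_bound _ ha fun x ↦ ?_
  set w := Vᗮ.starProjection x
  have happly : (A - A ∘L V.starProjection) x = A w := by
    simp [w]
  rw [happly]
  refine le_trans ?_ (mul_le_mul_of_nonneg_left (Vᗮ.norm_starProjection_apply_le x) ha)
  rcases eq_or_ne w 0 with hw | hw
  · simp [w, hw]
  have hunit := h ((‖w‖⁻¹ : ℂ) • w) (Vᗮ.smul_mem _ (Submodule.starProjection_apply_mem _ x))
    (norm_smul_inv_norm hw)
  rw [map_smul, norm_smul, norm_inv, Complex.norm_real, norm_norm,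
    inv_mul_le_iff₀ (norm_pos_iff.2 hw)] at hunit
  rwa [mul_comm]

lemma rank_comp_starProjection_span_le (A : H →L[ℂ] G) {m : ℕ} (v : Fin m → H) :
    haveI : FiniteDimensional ℂ (Submodule.span ℂ (Set.range v)) :=
      FiniteDimensional.span_of_finite ℂ (Set.finite_range v)
    (A ∘L (Submodule.span ℂ (Set.range v)).starProjection).toLinearMap.rank ≤ (m : Cardinal) := by
  have : FiniteDimensional ℂ (Submodule.span ℂ (Set.range v)) :=
    FiniteDimensional.span_of_finite ℂ (Set.finite_range v)
  have hrange : (A ∘L (Submodule.span ℂ (Set.range v)).starProjection).toLinearMap.range ≤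
      Submodule.span ℂ (Set.range fun j ↦ A (v j)) := by
    rintro _ ⟨x, rfl⟩
    have hmap := Submodule.mem_map_of_mem (f := A.toLinearMap)
      (Submodule.starProjection_apply_mem (Submodule.span ℂ (Set.range v)) x)
    rwa [Submodule.map_span, ← Set.range_comp] at hmap
  calc _ ≤ Module.rank ℂ (Submodule.span ℂ (Set.range fun j ↦ A (v j))) :=
        Submodule.rank_mono hrange
    _ ≤ Module.finrank ℂ (Submodule.span ℂ (Set.range fun j ↦ A (v j))) := by
        have := FiniteDimensional.span_of_finite ℂ (Set.finite_range fun j ↦ A (v j))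
        rw [Module.finrank_eq_rank]
    _ ≤ (m : Cardinal) := by
        exact_mod_cast (finrank_range_le_card fun j ↦ A (v j)).trans_eq (Fintype.card_fin m)

/-- Greedy construction: at most `k` orthonormal directions can be stretched by more than
`√(S / (k + 1))`. -/
lemma HilbertSchmidtSqLE.exists_rank_le_norm_sub_le {A : H →L[ℂ] G} {S : ℝ}
    (hA : HilbertSchmidtSqLE A S) (k : ℕ) :
    ∃ F : H →L[ℂ] G, F.toLinearMap.rank ≤ (k : Cardinal) ∧ ‖A - F‖ ≤ √(S / (k + 1)) := by
  obtain ⟨m, hmk, v, -, hsmall⟩ := exists_maximal_orthonormal_lt_norm A (√(S / (k + 1)))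
    fun m v hv hlarge ↦ hA.card_le hv hlarge
  have : FiniteDimensional ℂ (Submodule.span ℂ (Set.range v)) :=
    FiniteDimensional.span_of_finite ℂ (Set.finite_range v)
  refine ⟨A ∘L (Submodule.span ℂ (Set.range v)).starProjection,
    (rank_comp_starProjection_span_le A v).trans (by exact_mod_cast hmk),
    norm_sub_comp_starProjection_le (Real.sqrt_nonneg _) _ fun e he hnorm ↦
      hsmall e hnorm fun j ↦ ?_⟩
  exact Submodule.inner_left_of_mem_orthogonal (Submodule.subset_span (Set.mem_range_self j)) he

end ApproximationNumbers

section SquareIntegrable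

variable {X : Type*} [MeasurableSpace X] {μ : Measure X} {E : Type*} [NormedAddCommGroup E]

lemma eLpNorm_two_sq (f : X → E) : eLpNorm f 2 μ ^ 2 = ∫⁻ x, ‖f x‖ₑ ^ 2 ∂μ := by
  have h := eLpNorm_nnreal_pow_eq_lintegral (f := f) (μ := μ) (p := 2) two_ne_zero
  simpa only [ENNReal.coe_ofNat, NNReal.coe_ofNat, ENNReal.rpow_ofNat] using h

lemma memLp_two_iff_lintegral_enorm_sq {f : X → E} (hf : AEStronglyMeasurable f μ) :
    MemLp f 2 μ ↔ ∫⁻ x, ‖f x‖ₑ ^ 2 ∂μ < ⊤ := by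
  rw [← eLpNorm_two_sq, ENNReal.pow_lt_top_iff, or_iff_left two_ne_zero]
  exact ⟨fun h ↦ h.2, fun h ↦ ⟨hf, h⟩⟩

lemma lintegral_enorm_sq_lt_top {f : X → E} (hf : MemLp f 2 μ) : ∫⁻ x, ‖f x‖ₑ ^ 2 ∂μ < ⊤ :=
  (memLp_two_iff_lintegral_enorm_sq hf.1).1 hf

lemma lintegral_enorm_sq_eq_norm_sq {f : Lp E 2 μ} {g : X → E} (hfg : f =ᵐ[μ] g) :
    ∫⁻ x, ‖g x‖ₑ ^ 2 ∂μ = ENNReal.ofReal (‖f‖ ^ 2) := by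
  rw [ENNReal.ofReal_pow (norm_nonneg _), Lp.norm_def,
    ENNReal.ofReal_toReal (Lp.eLpNorm_ne_top f), eLpNorm_congr_ae hfg, eLpNorm_two_sq]

lemma norm_le_of_lintegral_enorm_sq_le {f : Lp E 2 μ} {g : X → E} {C : ℝ} (hC : 0 ≤ C)
    (hfg : f =ᵐ[μ] g) (h : ∫⁻ x, ‖g x‖ₑ ^ 2 ∂μ ≤ ENNReal.ofReal (C ^ 2)) : ‖f‖ ≤ C := by
  rw [lintegral_enorm_sq_eq_norm_sq hfg, ENNReal.ofReal_le_ofReal_iff (sq_nonneg C)] at h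
  exact (pow_le_pow_iff_left₀ (norm_nonneg f) hC two_ne_zero).1 h

lemma sq_lintegral_le (μ : Measure X) {f : X → ENNReal} (hf : AEMeasurable f μ) :
    (∫⁻ x, f x ∂μ) ^ 2 ≤ μ Set.univ * ∫⁻ x, f x ^ 2 ∂μ := by
  have h := ENNReal.lintegral_mul_le_Lp_mul_Lq μ Real.HolderConjugate.two_two
    (f := fun _ ↦ 1) (g := f) aemeasurable_const hf
  simp only [Pi.mul_apply, one_mul, one_pow, lintegral_const, ENNReal.rpow_ofNat] at h
  refine (pow_le_pow_left₀ zero_le h 2).trans_eq ?_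
  rw [mul_pow, ← ENNReal.rpow_natCast, ← ENNReal.rpow_natCast, ← ENNReal.rpow_mul,
    ← ENNReal.rpow_mul]
  norm_num

end SquareIntegrable

section OperatorsIntoLp

variable {X : Type*} [MeasurableSpace X] {μ : Measure X}

lemma exists_clm_ae_eq_apply {E : Type*} [NormedAddCommGroup E] [NormedSpace ℂ E]
    (R : X → StrongDual ℂ E) (hmeas : ∀ u, AEStronglyMeasurable (fun x ↦ R x u) μ) (C : ℝ)
    (hbound : ∀ u, ∫⁻ x, ‖R x u‖ₑ ^ 2 ∂μ ≤ ENNReal.ofReal (C * ‖u‖ ^ 2)) :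
    ∃ A : E →L[ℂ] Lp ℂ 2 μ, ∀ u, A u =ᵐ[μ] fun x ↦ R x u := by
  have hmem (u : E) : MemLp (fun x ↦ R x u) 2 μ :=
    (memLp_two_iff_lintegral_enorm_sq (hmeas u)).2 ((hbound u).trans_lt ENNReal.ofReal_lt_top)
  let L : E →ₗ[ℂ] Lp ℂ 2 μ :=
    { toFun := fun u ↦ (hmem u).toLp
      map_add' := fun u v ↦ by
        rw [← MemLp.toLp_add]
        exact MemLp.toLp_congr _ _ (.of_forall fun x ↦ map_add (R x) u v)
      map_smul' := fun c u ↦ by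
        rw [RingHom.id_apply, ← MemLp.toLp_const_smul]
        exact MemLp.toLp_congr _ _ (.of_forall fun x ↦ map_smul (R x) c u) }
  refine ⟨L.mkContinuous (√C) fun u ↦ ?_, fun u ↦ (hmem u).coeFn_toLp⟩
  refine norm_le_of_lintegral_enorm_sq_le (by positivity) (hmem u).coeFn_toLp
    ((hbound u).trans (ENNReal.ofReal_le_ofReal ?_))
  rw [mul_pow]
  gcongr
  exact (Real.sqrt_le_left (Real.sqrt_nonneg C)).1 le_rfl

variable {K : Type*} [NormedAddCommGroup K] [InnerProductSpace ℂ K] [CompleteSpace K]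

lemma sum_norm_sq_apply_le_of_orthonormal (L : StrongDual ℂ K) {m : ℕ} {v : Fin m → K}
    (hv : Orthonormal ℂ v) : ∑ j, ‖L (v j)‖ ^ 2 ≤ ‖L‖ ^ 2 := by
  have h := hv.sum_inner_products_le ((InnerProductSpace.toDual ℂ K).symm L) (s := Finset.univ)
  simp only [norm_inner_symm (v _), InnerProductSpace.toDual_symm_apply,
    LinearIsometryEquiv.norm_map] at h
  exact h

lemma exists_hilbertSchmidtSqLE_ae_eq_apply (R : X → StrongDual ℂ K)
    (hmeas : ∀ u, AEStronglyMeasurable (fun x ↦ R x u) μ) {S : ℝ} (hS : 0 ≤ S)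
    (hR : ∫⁻ x, ‖R x‖ₑ ^ 2 ∂μ ≤ ENNReal.ofReal S) :
    ∃ A : K →L[ℂ] Lp ℂ 2 μ, (∀ u, A u =ᵐ[μ] fun x ↦ R x u) ∧ HilbertSchmidtSqLE A S := by
  obtain ⟨A, hA⟩ := exists_clm_ae_eq_apply R hmeas S fun u ↦ by
    calc ∫⁻ x, ‖R x u‖ₑ ^ 2 ∂μ ≤ ∫⁻ x, ‖R x‖ₑ ^ 2 * ‖u‖ₑ ^ 2 ∂μ := by
          gcongr with x
          rw [← mul_pow]
          gcongr
          exact (R x).le_opENorm u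
      _ = (∫⁻ x, ‖R x‖ₑ ^ 2 ∂μ) * ‖u‖ₑ ^ 2 := lintegral_mul_const' _ _ (by finiteness)
      _ ≤ ENNReal.ofReal S * ‖u‖ₑ ^ 2 := by gcongr
      _ = ENNReal.ofReal (S * ‖u‖ ^ 2) := by
          rw [ENNReal.ofReal_mul hS, ENNReal.ofReal_pow (norm_nonneg u), ofReal_norm]
  refine ⟨A, hA, fun m v hv ↦ ?_⟩
  rw [← ENNReal.ofReal_le_ofReal_iff hS, ENNReal.ofReal_sum_of_nonneg fun j _ ↦ sq_nonneg _]
  calc ∑ j, ENNReal.ofReal (‖A (v j)‖ ^ 2) = ∑ j, ∫⁻ x, ‖R x (v j)‖ₑ ^ 2 ∂μ :=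
        Finset.sum_congr rfl fun j _ ↦ (lintegral_enorm_sq_eq_norm_sq (hA (v j))).symm
    _ = ∫⁻ x, ∑ j, ‖R x (v j)‖ₑ ^ 2 ∂μ :=
        (lintegral_finsetSum' _ fun j _ ↦ (hmeas (v j)).enorm.pow_const 2).symm
    _ ≤ ∫⁻ x, ‖R x‖ₑ ^ 2 ∂μ := by
        gcongr with x
        have h := ENNReal.ofReal_le_ofReal (sum_norm_sq_apply_le_of_orthonormal (R x) hv)
        simpa only [ENNReal.ofReal_sum_of_nonneg fun _ _ ↦ sq_nonneg _,
          ENNReal.ofReal_pow (norm_nonneg _), ofReal_norm] using h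
    _ ≤ ENNReal.ofReal S := hR

end OperatorsIntoLp

section DyadicCubes

variable {n : ℕ}

/-- The integer coordinates of the half-open dyadic cube of side `2⁻ᵏ` that contains `x`. -/
def dyadicIndex (k : ℕ) (x : Bdy n) : Fin n → ℤ := fun i ↦ ⌊(2 : ℝ) ^ k * x i⌋

/-- The half-open dyadic cube of side `2⁻ᵏ` whose corner is `2⁻ᵏ m`. -/
def dyadicCube (k : ℕ) (m : Fin n → ℤ) : Set (Bdy n) := {x | dyadicIndex k x = m}

lemma mem_dyadicCube_dyadicIndex (k : ℕ) (x : Bdy n) : x ∈ dyadicCube k (dyadicIndex k x) := rfl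

lemma measurable_dyadicIndex (k : ℕ) : Measurable (dyadicIndex k : Bdy n → Fin n → ℤ) :=
  measurable_pi_lambda _ fun _ ↦ Int.measurable_floor.comp (by fun_prop)

lemma measurableSet_dyadicCube (k : ℕ) (m : Fin n → ℤ) : MeasurableSet (dyadicCube k m) :=
  measurable_dyadicIndex k (measurableSet_singleton m)

lemma mem_dyadicCube_iff {k : ℕ} {m : Fin n → ℤ} {x : Bdy n} :
    x ∈ dyadicCube k m ↔ ∀ i, x i ∈ Set.Ico ((m i : ℝ) / 2 ^ k) (((m i : ℝ) + 1) / 2 ^ k) := by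
  refine funext_iff.trans (forall_congr' fun i ↦ ?_)
  rw [dyadicIndex, Int.floor_eq_iff, Set.mem_Ico, div_le_iff₀ (by positivity),
    lt_div_iff₀ (by positivity), mul_comm]

lemma fract_of_mem_dyadicCube {k : ℕ} {m : Fin n → ℤ} {x : Bdy n} (hx : x ∈ dyadicCube k m)
    (i : Fin n) : Int.fract ((2 : ℝ) ^ k * x i) = 2 ^ k * x i - m i := by
  rw [Int.fract, ← congrFun hx i, dyadicIndex]

lemma dyadicIndex_eq_of_succ {k : ℕ} {x y : Bdy n}
    (h : dyadicIndex (k + 1) x = dyadicIndex (k + 1) y) : dyadicIndex k x = dyadicIndex k y := by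
  have hhalf (z : Bdy n) (i : Fin n) : dyadicIndex k z i = dyadicIndex (k + 1) z i / 2 := by
    have hfloor := Int.floor_div_natCast ((2 : ℝ) ^ (k + 1) * z i) 2
    rw [dyadicIndex, dyadicIndex, show (2 : ℝ) ^ k * z i = 2 ^ (k + 1) * z i / (2 : ℕ) by
      push_cast; ring, hfloor]
    rfl
  funext i
  rw [hhalf, hhalf, h]

lemma norm_sub_le_of_mem_dyadicCube {k : ℕ} {m : Fin n → ℤ} {x y : Bdy n}
    (hx : x ∈ dyadicCube k m) (hy : y ∈ dyadicCube k m) : ‖x - y‖ ≤ √n / 2 ^ k := by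
  have hcoord (i : Fin n) : ‖(x - y) i‖ ≤ (2 ^ k)⁻¹ := by
    have hxi := mem_dyadicCube_iff.1 hx i
    have hyi := mem_dyadicCube_iff.1 hy i
    rw [Set.mem_Ico, add_div, one_div] at hxi hyi
    rw [PiLp.sub_apply, Real.norm_eq_abs, abs_le]
    constructor <;> linarith
  rw [EuclideanSpace.norm_eq, Real.sqrt_le_left (by positivity), div_pow,
    Real.sq_sqrt n.cast_nonneg, div_eq_mul_inv, ← inv_pow]
  calc ∑ i, ‖(x - y) i‖ ^ 2 ≤ ∑ _i : Fin n, ((2 : ℝ) ^ k)⁻¹ ^ 2 := by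
        gcongr with i
        exact hcoord i
    _ = n * ((2 : ℝ) ^ k)⁻¹ ^ 2 := by
        rw [Finset.sum_const, Finset.card_univ, Fintype.card_fin, nsmul_eq_mul]

lemma lintegral_eq_tsum_dyadicCube (k : ℕ) (F : Bdy n → ENNReal) :
    ∫⁻ x, F x = ∑' m, ∫⁻ x in dyadicCube k m, F x := by
  rw [← lintegral_iUnion (measurableSet_dyadicCube k)]
  · rw [Set.iUnion_eq_univ_iff.2 fun x ↦ ⟨_, mem_dyadicCube_dyadicIndex k x⟩, Measure.restrict_univ]
  · exact fun a b hab ↦ Set.disjoint_left.2 fun x hx hx' ↦ hab (hx.symm.trans hx')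

lemma integral_Ico_comp_fract (k : ℕ) (j : ℤ) (F : ℝ → ℝ) :
    (2 : ℝ) ^ k * ∫ t in Set.Ico ((j : ℝ) / 2 ^ k) (((j : ℝ) + 1) / 2 ^ k),
      F (Int.fract ((2 : ℝ) ^ k * t)) = ∫ s in (0 : ℝ)..1, F s := by
  have hk : (2 : ℝ) ^ k ≠ 0 := by positivity
  have hfract : ∀ t ∈ Set.Ico ((j : ℝ) / 2 ^ k) (((j : ℝ) + 1) / 2 ^ k),
      F (Int.fract ((2 : ℝ) ^ k * t)) = F (2 ^ k * t - j) := fun t ht ↦ by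
    rw [Set.mem_Ico, div_le_iff₀ (by positivity), lt_div_iff₀ (by positivity), mul_comm t] at ht
    rw [Int.fract, Int.floor_eq_iff.2 ht]
  rw [setIntegral_congr_fun measurableSet_Ico hfract, integral_Ico_eq_integral_Ioc,
    ← intervalIntegral.integral_of_le (by gcongr; linarith),
    intervalIntegral.integral_comp_mul_sub F hk, smul_eq_mul, ← mul_assoc, mul_inv_cancel₀ hk,
    one_mul]
  congr 1 <;> field_simp <;> ring

lemma integral_dyadicCube_prod_fract (k : ℕ) (m : Fin n → ℤ) (F : Fin n → ℝ → ℝ) :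
    (2 : ℝ) ^ (k * n) * ∫ y in dyadicCube k m, ∏ i, F i (Int.fract ((2 : ℝ) ^ k * y i)) =
      ∏ i, ∫ s in (0 : ℝ)..1, F i s := by
  let G (i : Fin n) : ℝ → ℝ :=
    (Set.Ico ((m i : ℝ) / 2 ^ k) (((m i : ℝ) + 1) / 2 ^ k)).indicator
      fun t ↦ F i (Int.fract ((2 : ℝ) ^ k * t))
  have hprod (y : Bdy n) : (dyadicCube k m).indicator
      (fun y ↦ ∏ i, F i (Int.fract ((2 : ℝ) ^ k * y i))) y = ∏ i, G i (y i) := by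
    by_cases hy : y ∈ dyadicCube k m
    · rw [Set.indicator_of_mem hy]
      exact Finset.prod_congr rfl fun i _ ↦
        (Set.indicator_of_mem (mem_dyadicCube_iff.1 hy i) fun t ↦ F i (Int.fract (2 ^ k * t))).symm
    · obtain ⟨i, hi⟩ := not_forall.1 (mt mem_dyadicCube_iff.2 hy)
      rw [Set.indicator_of_notMem hy]
      exact (Finset.prod_eq_zero (Finset.mem_univ i) (Set.indicator_of_notMem hi _)).symm
  have hcoords : ∫ y : Bdy n, ∏ i, G i (y i) = ∫ y : Fin n → ℝ, ∏ i, G i (y i) :=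
    (PiLp.volume_preserving_ofLp (Fin n)).integral_comp
      (MeasurableEquiv.toLp 2 (Fin n → ℝ)).symm.measurableEmbedding (fun y ↦ ∏ i, G i (y i))
  rw [← integral_indicator (measurableSet_dyadicCube k m), integral_congr_ae (.of_forall hprod),
    hcoords, integral_fintype_prod_volume_eq_prod, pow_mul, ← Fin.prod_const,
    ← Finset.prod_mul_distrib]
  refine Finset.prod_congr rfl fun i _ ↦ ?_
  rw [integral_indicator measurableSet_Ico, integral_Ico_comp_fract]

lemma isBounded_dyadicCube (k : ℕ) (m : Fin n → ℤ) : Bornology.IsBounded (dyadicCube k m) :=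
  Metric.isBounded_iff.2 ⟨√n / 2 ^ k, fun x hx y hy ↦
    (dist_eq_norm x y).trans_le (norm_sub_le_of_mem_dyadicCube hx hy)⟩

lemma two_pow_mul_volume_dyadicCube (k : ℕ) (m : Fin n → ℤ) :
    (2 : ENNReal) ^ (k * n) * volume (dyadicCube k m) = 1 := by
  have h := integral_dyadicCube_prod_fract k m fun _ _ ↦ 1
  simp only [Finset.prod_const_one, setIntegral_const, smul_eq_mul, mul_one,
    intervalIntegral.integral_const, sub_zero] at h
  rw [← ENNReal.toReal_eq_one_iff, ENNReal.toReal_mul, ENNReal.toReal_pow, ENNReal.toReal_ofNat]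
  exact h

instance (k : ℕ) (m : Fin n → ℤ) : IsFiniteMeasure (volume.restrict (dyadicCube k m)) :=
  isFiniteMeasure_restrict.2 (isBounded_dyadicCube k m).measure_lt_top.ne

lemma integrableOn_dyadicCube {f : Bdy n → ℂ} (hf : MemLp f 2 volume) (k : ℕ) (m : Fin n → ℤ) :
    IntegrableOn f (dyadicCube k m) :=
  (hf.restrict _).integrable one_le_two

end DyadicCubes

section AffineBasis

variable {n : ℕ}

/-- The one-dimensional factor of `affineBasis`: the normalized Legendre polynomial on `[0, 1]` of
degree one if `p` holds, of degree zero otherwise. -/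
def legendreFactor (p : Prop) [Decidable p] (s : ℝ) : ℝ := if p then √12 * (s - 1 / 2) else 1

lemma integral_legendreFactor_mul (p q : Prop) [Decidable p] [Decidable q] :
    ∫ s in (0 : ℝ)..1, legendreFactor p s * legendreFactor q s = if p ↔ q then 1 else 0 := by
  have hlin : ∫ s in (0 : ℝ)..1, √12 * (s - 1 / 2) = 0 := by
    rw [intervalIntegral.integral_const_mul,
      intervalIntegral.integral_comp_sub_right (fun s : ℝ ↦ s), integral_id]
    norm_num
  have hsq : ∫ s in (0 : ℝ)..1, √12 * (s - 1 / 2) * (√12 * (s - 1 / 2)) = 1 := by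
    have h (s : ℝ) : √12 * (s - 1 / 2) * (√12 * (s - 1 / 2)) = 12 * (s - 1 / 2) ^ 2 := by
      rw [← pow_two, mul_pow, Real.sq_sqrt (by norm_num)]
    simp only [h]
    rw [intervalIntegral.integral_const_mul,
      intervalIntegral.integral_comp_sub_right (fun s : ℝ ↦ s ^ 2), integral_pow]
    norm_num
  by_cases hp : p <;> by_cases hq : q <;>
    simp only [legendreFactor, hp, hq, if_true, if_false, iff_self, iff_true, iff_false,
      not_true, mul_one, one_mul, hlin, hsq, intervalIntegral.integral_const, sub_zero, smul_eq_mul]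

/-- On each dyadic cube of side `2⁻ᵏ`, the functions `affineBasis k b` are an `L²`-orthogonal basis
of the affine functions; `none` stands for the constant and `some i` for the `i`-th coordinate. -/
def affineBasis (k : ℕ) (b : Option (Fin n)) (x : Bdy n) : ℝ :=
  b.elim 1 fun i ↦ √12 * (Int.fract ((2 : ℝ) ^ k * x i) - 1 / 2)

lemma affineBasis_eq_prod (k : ℕ) (b : Option (Fin n)) (x : Bdy n) :
    affineBasis k b x = ∏ i, legendreFactor (b = some i) (Int.fract ((2 : ℝ) ^ k * x i)) := by
  cases b with
  | none => simp [affineBasis, legendreFactor]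
  | some i => simp [affineBasis, legendreFactor, Finset.prod_ite_eq]

lemma integral_affineBasis_mul (k : ℕ) (m : Fin n → ℤ) (b c : Option (Fin n)) :
    (2 : ℝ) ^ (k * n) * ∫ y in dyadicCube k m, affineBasis k b y * affineBasis k c y =
      if b = c then 1 else 0 := by
  simp only [affineBasis_eq_prod, ← Finset.prod_mul_distrib]
  rw [integral_dyadicCube_prod_fract k m fun i s ↦
    legendreFactor (b = some i) s * legendreFactor (c = some i) s]
  simp only [integral_legendreFactor_mul, Finset.prod_boole, Finset.mem_univ, true_imp_iff]
  exact if_congr Option.ext_iff.symm rfl rfl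

lemma norm_affineBasis_le (k : ℕ) (b : Option (Fin n)) (x : Bdy n) : ‖affineBasis k b x‖ ≤ 2 := by
  cases b with
  | none => norm_num [affineBasis]
  | some i =>
    have hfract : |Int.fract ((2 : ℝ) ^ k * x i) - 1 / 2| ≤ 1 / 2 := by
      rw [abs_le]
      constructor <;> linarith [Int.fract_nonneg ((2 : ℝ) ^ k * x i),
        Int.fract_lt_one ((2 : ℝ) ^ k * x i)]
    have hsqrt : √12 ≤ 4 := Real.sqrt_le_iff.2 (by norm_num)
    rw [affineBasis, Option.elim_some, norm_mul, Real.norm_eq_abs, Real.norm_eq_abs,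
      abs_of_nonneg (Real.sqrt_nonneg 12)]
    calc √12 * |Int.fract ((2 : ℝ) ^ k * x i) - 1 / 2| ≤ 4 * (1 / 2) := by gcongr
      _ = 2 := by norm_num

lemma measurable_affineBasis (k : ℕ) (b : Option (Fin n)) :
    Measurable (affineBasis k b : Bdy n → ℝ) := by
  cases b with
  | none => exact measurable_const
  | some i =>
    exact ((measurable_fract.comp (by fun_prop : Measurable fun x : Bdy n ↦ (2 : ℝ) ^ k * x i)).sub
      measurable_const).const_mul _

lemma exists_sum_affineBasis_eq (k : ℕ) (m : Fin n → ℤ) (ψ : Bdy n →ᵃ[ℝ] ℂ) :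
    ∃ c : Option (Fin n) → ℂ, ∀ y ∈ dyadicCube k m, ψ y = ∑ b, affineBasis k b y • c b := by
  let z : Bdy n := WithLp.toLp 2 fun i ↦ ((m i : ℝ) + 1 / 2) / 2 ^ k
  refine ⟨fun b ↦ b.elim (ψ z) fun i ↦ ((2 : ℝ) ^ k * √12)⁻¹ • ψ.linear (bdirs n i),
    fun y hy ↦ ?_⟩
  have hdiff : y -ᵥ z = ∑ i, (y i - z i) • bdirs n i := by
    ext j
    simp [bdirs, Pi.single_apply]
  rw [← vsub_vadd y z, AffineMap.map_vadd, hdiff, map_sum, vadd_eq_add, add_comm, ← hdiff,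
    vsub_vadd, Fintype.sum_option]
  congr 1
  · simp [affineBasis]
  · refine Finset.sum_congr rfl fun i _ ↦ ?_
    rw [map_smul]
    simp only [affineBasis, Option.elim_some, smul_smul, fract_of_mem_dyadicCube hy, z]
    congr 1
    have : √12 ≠ 0 := by positivity
    field_simp
    ring

lemma exists_affineMap_eq_sum_affineBasis (k : ℕ) (m : Fin n → ℤ) (c : Option (Fin n) → ℂ) :
    ∃ ψ : Bdy n →ᵃ[ℝ] ℂ, ∀ y ∈ dyadicCube k m, ∑ b, affineBasis k b y • c b = ψ y := by
  let L : Bdy n →ₗ[ℝ] ℂ :=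
    ∑ i, (EuclideanSpace.proj i).toLinearMap.smulRight ((√12 * 2 ^ k) • c (some i))
  let a : ℂ := c none - ∑ i, (√12 * (m i + 1 / 2)) • c (some i)
  refine ⟨L.toAffineMap + AffineMap.const ℝ _ a, fun y hy ↦ ?_⟩
  have hL : L y = ∑ i, y i • (√12 * 2 ^ k) • c (some i) := LinearMap.sum_apply _ _ _
  change _ = L y + a
  rw [hL, Fintype.sum_option, add_comm, add_sub_left_comm, ← Finset.sum_sub_distrib, add_comm]
  congr 1
  · exact one_smul ℝ _
  · refine Finset.sum_congr rfl fun i _ ↦ ?_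
    rw [smul_smul, ← sub_smul]
    simp only [affineBasis, Option.elim_some, fract_of_mem_dyadicCube hy]
    congr 1
    ring

end AffineBasis

section AffineProjection

variable {n : ℕ} {k : ℕ} {f φ : Bdy n → ℂ}

/-- The `L²`-orthogonal projection of `φ` onto the functions that are affine on every dyadic cube of
side `2⁻ᵏ`, expanded in `affineBasis`, which the factor `2 ^ (k * n)` normalizes. -/
def affineProj (k : ℕ) (φ : Bdy n → ℂ) (x : Bdy n) : ℂ :=
  ∑ b, affineBasis k b x •
    (2 : ℝ) ^ (k * n) • ∫ y in dyadicCube k (dyadicIndex k x), affineBasis k b y • φ y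

lemma measurable_affineProj (k : ℕ) (φ : Bdy n → ℂ) : Measurable (affineProj k φ) :=
  Finset.measurable_sum _ fun b _ ↦ (measurable_affineBasis k b).smul
    ((measurable_of_countable fun m ↦
      (2 : ℝ) ^ (k * n) • ∫ y in dyadicCube k m, affineBasis k b y • φ y).comp
        (measurable_dyadicIndex k))

lemma affineProj_congr_ae (h : f =ᵐ[volume] φ) : affineProj k f = affineProj k φ := by
  funext x
  simp only [affineProj]
  congr! 3 with b
  exact integral_congr_ae (ae_restrict_of_ae (h.mono fun y hy ↦ by simp only [hy]))

lemma integrableOn_affineBasis_smul {s : Set (Bdy n)} (b : Option (Fin n))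
    (hφ : IntegrableOn φ s) : IntegrableOn (fun y ↦ affineBasis k b y • φ y) s :=
  hφ.bdd_smul 2 (measurable_affineBasis k b).aestronglyMeasurable
    (.of_forall fun y ↦ norm_affineBasis_le k b y)

lemma affineProj_add {x : Bdy n} (hf : IntegrableOn f (dyadicCube k (dyadicIndex k x)))
    (hφ : IntegrableOn φ (dyadicCube k (dyadicIndex k x))) :
    affineProj k (f + φ) x = affineProj k f x + affineProj k φ x := by
  simp only [affineProj, ← Finset.sum_add_distrib, ← smul_add, Pi.add_apply]
  congr! 3 with b
  simp only [smul_add]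
  exact integral_add (integrableOn_affineBasis_smul b hf) (integrableOn_affineBasis_smul b hφ)

lemma affineProj_const_smul (k : ℕ) (c : ℂ) (φ : Bdy n → ℂ) (x : Bdy n) :
    affineProj k (c • φ) x = c • affineProj k φ x := by
  simp only [affineProj, Finset.smul_sum, Pi.smul_apply, smul_comm _ c, integral_smul]

lemma affineProj_sub {x : Bdy n} (hf : IntegrableOn f (dyadicCube k (dyadicIndex k x)))
    (hφ : IntegrableOn φ (dyadicCube k (dyadicIndex k x))) :
    affineProj k (f - φ) x = affineProj k f x - affineProj k φ x := by
  rw [sub_eq_add_neg, ← neg_one_smul ℂ φ, affineProj_add hf (hφ.smul (-1 : ℂ)),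
    affineProj_const_smul, neg_one_smul, ← sub_eq_add_neg]

lemma affineProj_eq_of_eqOn_affineMap {m : Fin n → ℤ} {ψ : Bdy n →ᵃ[ℝ] ℂ}
    (hφ : Set.EqOn φ ψ (dyadicCube k m)) : Set.EqOn (affineProj k φ) φ (dyadicCube k m) := by
  obtain ⟨c, hc⟩ := exists_sum_affineBasis_eq k m ψ
  have hcoeff (b : Option (Fin n)) :
      (2 : ℝ) ^ (k * n) • ∫ y in dyadicCube k m, affineBasis k b y • φ y = c b := by
    have hint (b' : Option (Fin n)) :
        IntegrableOn (fun y ↦ (affineBasis k b y * affineBasis k b' y) • c b')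
          (dyadicCube k m) := by
      simp only [mul_smul]
      exact integrableOn_affineBasis_smul b
        (integrableOn_affineBasis_smul b' (integrable_const (c b')))
    have hexpand : Set.EqOn (fun y ↦ affineBasis k b y • φ y)
        (fun y ↦ ∑ b', (affineBasis k b y * affineBasis k b' y) • c b') (dyadicCube k m) :=
      fun y hy ↦ by simp only [hφ hy, hc y hy, Finset.smul_sum, mul_smul]
    rw [setIntegral_congr_fun (measurableSet_dyadicCube k m) hexpand,
      integral_finsetSum _ fun b' _ ↦ hint b', Finset.smul_sum]
    simp only [integral_smul_const, smul_smul, integral_affineBasis_mul, ite_smul, one_smul,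
      zero_smul, Finset.sum_ite_eq, Finset.mem_univ, if_true]
  intro x hx
  rw [hφ hx, hc x hx]
  exact Finset.sum_congr rfl fun b _ ↦ by rw [show dyadicIndex k x = m from hx, hcoeff]

lemma exists_affineMap_eqOn_affineProj (k : ℕ) (φ : Bdy n → ℂ) (m : Fin n → ℤ) :
    ∃ ψ : Bdy n →ᵃ[ℝ] ℂ, Set.EqOn (affineProj k φ) ψ (dyadicCube k m) := by
  obtain ⟨ψ, hψ⟩ := exists_affineMap_eq_sum_affineBasis k m fun b ↦
    (2 : ℝ) ^ (k * n) • ∫ y in dyadicCube k m, affineBasis k b y • φ y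
  refine ⟨ψ, fun x hx ↦ ?_⟩
  rw [← hψ x hx, affineProj, show dyadicIndex k x = m from hx]

lemma affineProj_succ_affineProj (k : ℕ) (φ : Bdy n → ℂ) :
    affineProj (k + 1) (affineProj k φ) = affineProj k φ := by
  funext x
  obtain ⟨ψ, hψ⟩ := exists_affineMap_eqOn_affineProj k φ (dyadicIndex k x)
  exact affineProj_eq_of_eqOn_affineMap (fun y hy ↦ hψ (dyadicIndex_eq_of_succ hy))
    (mem_dyadicCube_dyadicIndex (k + 1) x)

lemma enorm_affineProj_le (k : ℕ) (φ : Bdy n → ℂ) (x : Bdy n) :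
    ‖affineProj k φ x‖ₑ ≤
      4 * (n + 1) * 2 ^ (k * n) * ∫⁻ y in dyadicCube k (dyadicIndex k x), ‖φ y‖ₑ := by
  have hbasis (b : Option (Fin n)) (y : Bdy n) : ‖affineBasis k b y‖ₑ ≤ 2 := by
    rw [← ofReal_norm]
    exact (ENNReal.ofReal_le_ofReal (norm_affineBasis_le k b y)).trans_eq (by norm_num)
  have hcoeff (b : Option (Fin n)) :
      ‖∫ y in dyadicCube k (dyadicIndex k x), affineBasis k b y • φ y‖ₑ ≤
        2 * ∫⁻ y in dyadicCube k (dyadicIndex k x), ‖φ y‖ₑ := by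
    rw [← lintegral_const_mul' _ _ ENNReal.ofNat_ne_top]
    refine (enorm_integral_le_lintegral_enorm _).trans (lintegral_mono fun y ↦ ?_)
    rw [enorm_smul]
    gcongr
    exact hbasis b y
  calc ‖affineProj k φ x‖ₑ
      ≤ ∑ _b : Option (Fin n), 2 * (2 ^ (k * n) *
          (2 * ∫⁻ y in dyadicCube k (dyadicIndex k x), ‖φ y‖ₑ)) := by
        refine (enorm_sum_le _ _).trans (Finset.sum_le_sum fun b _ ↦ ?_)
        rw [enorm_smul, enorm_smul, enorm_pow, Real.enorm_of_nonneg two_pos.le,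
          ENNReal.ofReal_ofNat]
        gcongr
        exacts [hbasis b x, hcoeff b]
    _ = _ := by
        simp only [Finset.sum_const, Finset.card_univ, Fintype.card_option, Fintype.card_fin,
          nsmul_eq_mul]
        push_cast
        ring

lemma enorm_affineProj_sq_le (k : ℕ) (hφ : AEStronglyMeasurable φ volume) (x : Bdy n) :
    ‖affineProj k φ x‖ₑ ^ 2 ≤ (4 * (n + 1)) ^ 2 * 2 ^ (k * n) *
      ∫⁻ y in dyadicCube k (dyadicIndex k x), ‖φ y‖ₑ ^ 2 := by
  set Q := dyadicCube k (dyadicIndex k x)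
  have hcauchy : (∫⁻ y in Q, ‖φ y‖ₑ) ^ 2 ≤ volume Q * ∫⁻ y in Q, ‖φ y‖ₑ ^ 2 := by
    simpa only [Measure.restrict_apply_univ] using
      sq_lintegral_le (volume.restrict Q) hφ.restrict.enorm
  calc ‖affineProj k φ x‖ₑ ^ 2 ≤ (4 * (n + 1) * 2 ^ (k * n) * ∫⁻ y in Q, ‖φ y‖ₑ) ^ 2 := by
        gcongr
        exact enorm_affineProj_le k φ x
    _ = (4 * (n + 1)) ^ 2 * 2 ^ (k * n) * (2 ^ (k * n) * (∫⁻ y in Q, ‖φ y‖ₑ) ^ 2) := by ring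
    _ ≤ (4 * (n + 1)) ^ 2 * 2 ^ (k * n) *
          (2 ^ (k * n) * (volume Q * ∫⁻ y in Q, ‖φ y‖ₑ ^ 2)) := by gcongr
    _ = _ := by rw [← mul_assoc (2 ^ (k * n)), two_pow_mul_volume_dyadicCube, one_mul]

lemma setLIntegral_affineProj_sq_le (k : ℕ) (hφ : AEStronglyMeasurable φ volume)
    (m : Fin n → ℤ) :
    ∫⁻ x in dyadicCube k m, ‖affineProj k φ x‖ₑ ^ 2 ≤
      (4 * (n + 1)) ^ 2 * ∫⁻ x in dyadicCube k m, ‖φ x‖ₑ ^ 2 := by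
  calc ∫⁻ x in dyadicCube k m, ‖affineProj k φ x‖ₑ ^ 2
      ≤ ∫⁻ _ in dyadicCube k m,
          (4 * (n + 1)) ^ 2 * 2 ^ (k * n) * ∫⁻ y in dyadicCube k m, ‖φ y‖ₑ ^ 2 :=
        setLIntegral_mono' (measurableSet_dyadicCube k m) fun x hx ↦ by
          simpa only [show dyadicIndex k x = m from hx] using enorm_affineProj_sq_le k hφ x
    _ = (4 * (n + 1)) ^ 2 * (2 ^ (k * n) * volume (dyadicCube k m)) *
          ∫⁻ y in dyadicCube k m, ‖φ y‖ₑ ^ 2 := by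
        rw [setLIntegral_const]
        ring
    _ = _ := by rw [two_pow_mul_volume_dyadicCube, mul_one]

lemma lintegral_affineProj_sq_le (k : ℕ) (hφ : AEStronglyMeasurable φ volume) :
    ∫⁻ x, ‖affineProj k φ x‖ₑ ^ 2 ≤ (4 * (n + 1)) ^ 2 * ∫⁻ x, ‖φ x‖ₑ ^ 2 := by
  rw [lintegral_eq_tsum_dyadicCube k, lintegral_eq_tsum_dyadicCube k fun x ↦ ‖φ x‖ₑ ^ 2,
    ← ENNReal.tsum_mul_left]
  exact ENNReal.tsum_le_tsum (setLIntegral_affineProj_sq_le k hφ)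

lemma enorm_sub_sq_le {E : Type*} [SeminormedAddCommGroup E] (a b : E) :
    ‖a - b‖ₑ ^ 2 ≤ 2 * ‖a‖ₑ ^ 2 + 2 * ‖b‖ₑ ^ 2 := by
  have h := ENNReal.rpow_add_le_mul_rpow_add_rpow ‖a‖ₑ ‖b‖ₑ one_le_two
  norm_num at h
  rw [← mul_add]
  exact (pow_le_pow_left₀ zero_le enorm_sub_le 2).trans h

lemma setLIntegral_sub_affineProj_sq_le (k : ℕ) (hf : MemLp f 2 volume) (m : Fin n → ℤ)
    (ψ : Bdy n →ᵃ[ℝ] ℂ) :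
    ∫⁻ x in dyadicCube k m, ‖f x - affineProj k f x‖ₑ ^ 2 ≤
      2 * (1 + (4 * (n + 1)) ^ 2) * ∫⁻ x in dyadicCube k m, ‖f x - ψ x‖ₑ ^ 2 := by
  have hψ : Continuous ψ := ψ.continuous_of_finiteDimensional
  have hsub : AEStronglyMeasurable (f - ⇑ψ) volume := hf.1.sub hψ.aestronglyMeasurable
  have hψint : IntegrableOn ψ (dyadicCube k m) :=
    (hψ.continuousOn.integrableOn_compact (isBounded_dyadicCube k m).isCompact_closure).mono_set
      subset_closure
  have hdecomp : ∀ x ∈ dyadicCube k m,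
      f x - affineProj k f x = (f - ⇑ψ) x - affineProj k (f - ⇑ψ) x := fun x hx ↦ by
    have hx' : dyadicIndex k x = m := hx
    rw [affineProj_sub (hx' ▸ integrableOn_dyadicCube hf k m) (hx' ▸ hψint),
      affineProj_eq_of_eqOn_affineMap (fun _ _ ↦ rfl) hx, Pi.sub_apply, sub_sub_sub_cancel_right]
  calc ∫⁻ x in dyadicCube k m, ‖f x - affineProj k f x‖ₑ ^ 2
      ≤ ∫⁻ x in dyadicCube k m,
          (2 * ‖(f - ⇑ψ) x‖ₑ ^ 2 + 2 * ‖affineProj k (f - ⇑ψ) x‖ₑ ^ 2) :=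
        setLIntegral_mono' (measurableSet_dyadicCube k m) fun x hx ↦ by
          rw [hdecomp x hx]
          exact enorm_sub_sq_le _ _
    _ = (2 * ∫⁻ x in dyadicCube k m, ‖(f - ⇑ψ) x‖ₑ ^ 2) +
          2 * ∫⁻ x in dyadicCube k m, ‖affineProj k (f - ⇑ψ) x‖ₑ ^ 2 := by
        rw [lintegral_add_right _ (((measurable_affineProj k _).enorm.pow_const 2).const_mul 2),
          lintegral_const_mul' _ _ ENNReal.ofNat_ne_top,
          lintegral_const_mul' _ _ ENNReal.ofNat_ne_top]
    _ ≤ (2 * ∫⁻ x in dyadicCube k m, ‖(f - ⇑ψ) x‖ₑ ^ 2) +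
          2 * ((4 * (n + 1)) ^ 2 * ∫⁻ x in dyadicCube k m, ‖(f - ⇑ψ) x‖ₑ ^ 2) := by
        gcongr
        exact setLIntegral_affineProj_sq_le k hsub m
    _ = _ := by
        simp only [Pi.sub_apply]
        ring

lemma lintegral_sub_affineProj_sq_le (k : ℕ) (hf : MemLp f 2 volume)
    (ψ : Bdy n → Bdy n →ᵃ[ℝ] ℂ) :
    ∫⁻ x, ‖f x - affineProj k f x‖ₑ ^ 2 ≤ 2 * (1 + (4 * (n + 1)) ^ 2) * 2 ^ (k * n) *
      ∫⁻ y, ∫⁻ x in dyadicCube k (dyadicIndex k y), ‖f x - ψ y x‖ₑ ^ 2 := by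
  rw [lintegral_eq_tsum_dyadicCube k,
    lintegral_eq_tsum_dyadicCube k fun y ↦
      ∫⁻ x in dyadicCube k (dyadicIndex k y), ‖f x - ψ y x‖ₑ ^ 2, ← ENNReal.tsum_mul_left]
  refine ENNReal.tsum_le_tsum fun m ↦ ?_
  set I := ∫⁻ x in dyadicCube k m, ‖f x - affineProj k f x‖ₑ ^ 2
  have haverage : I * volume (dyadicCube k m) ≤ 2 * (1 + (4 * (n + 1)) ^ 2) *
      ∫⁻ y in dyadicCube k m, ∫⁻ x in dyadicCube k (dyadicIndex k y), ‖f x - ψ y x‖ₑ ^ 2 := by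
    rw [← setLIntegral_const, ← lintegral_const_mul' _ _ (by finiteness)]
    refine setLIntegral_mono' (measurableSet_dyadicCube k m) fun y hy ↦ ?_
    rw [show dyadicIndex k y = m from hy]
    exact setLIntegral_sub_affineProj_sq_le k hf m (ψ y)
  calc I = 2 ^ (k * n) * (I * volume (dyadicCube k m)) := by
        rw [mul_left_comm, two_pow_mul_volume_dyadicCube, mul_one]
    _ ≤ _ := mul_le_mul_right haverage _
    _ = _ := by ring

end AffineProjection

section AffineProjectionOnLp

variable {n : ℕ}

lemma affineProj_coeFn_add (k : ℕ) (F G : Hbd n) (x : Bdy n) :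
    affineProj k (F + G : Hbd n) x = affineProj k F x + affineProj k G x := by
  rw [affineProj_congr_ae (Lp.coeFn_add F G),
    affineProj_add (integrableOn_dyadicCube (Lp.memLp F) _ _)
      (integrableOn_dyadicCube (Lp.memLp G) _ _)]

lemma affineProj_coeFn_smul (k : ℕ) (c : ℂ) (F : Hbd n) (x : Bdy n) :
    affineProj k (c • F : Hbd n) x = c • affineProj k F x := by
  rw [affineProj_congr_ae (Lp.coeFn_smul c F), affineProj_const_smul]

lemma norm_affineProj_coeFn_le (k : ℕ) (F : Hbd n) (x : Bdy n) :
    ‖affineProj k F x‖ ≤ 4 * (n + 1) * √2 ^ (k * n) * ‖F‖ := by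
  refine (pow_le_pow_iff_left₀ (norm_nonneg _) (by positivity) two_ne_zero).1 ?_
  rw [← ENNReal.ofReal_le_ofReal_iff (by positivity), ENNReal.ofReal_pow (norm_nonneg _),
    ofReal_norm]
  calc ‖affineProj k F x‖ₑ ^ 2 ≤ (4 * (n + 1)) ^ 2 * 2 ^ (k * n) * ∫⁻ y, ‖F y‖ₑ ^ 2 :=
        (enorm_affineProj_sq_le k (Lp.aestronglyMeasurable F) x).trans <| by
          gcongr
          exact Measure.restrict_le_self
    _ = ENNReal.ofReal ((4 * (n + 1)) ^ 2 * 2 ^ (k * n) * ‖F‖ ^ 2) := by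
        rw [lintegral_enorm_sq_eq_norm_sq (ae_eq_refl F), ENNReal.ofReal_mul (by positivity)]
        congr 1
        norm_cast
    _ = ENNReal.ofReal ((4 * (n + 1) * √2 ^ (k * n) * ‖F‖) ^ 2) := by
        have hsq : (√2 ^ (k * n)) ^ 2 = 2 ^ (k * n) := by
          rw [← pow_mul, mul_comm, pow_mul, Real.sq_sqrt zero_le_two]
        rw [← hsq, ← mul_pow, ← mul_pow]

/-- The functional `F ↦ affineProj k F x` on `L²`, which is the value at `x` of the operator kernel
of `affineProjLp`. -/
def affineProjEval (k : ℕ) (x : Bdy n) : StrongDual ℂ (Hbd n) :=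
  LinearMap.mkContinuous
    { toFun := fun F ↦ affineProj k F x
      map_add' := fun F G ↦ affineProj_coeFn_add k F G x
      map_smul' := fun c F ↦ affineProj_coeFn_smul k c F x }
    (4 * (n + 1) * √2 ^ (k * n)) fun F ↦ norm_affineProj_coeFn_le k F x

@[simp]
lemma affineProjEval_apply (k : ℕ) (x : Bdy n) (F : Hbd n) :
    affineProjEval k x F = affineProj k F x := rfl

lemma norm_affineProjEval_le (k : ℕ) (x : Bdy n) :
    ‖affineProjEval k x‖ ≤ 4 * (n + 1) * √2 ^ (k * n) :=
  LinearMap.mkContinuous_norm_le _ (by positivity) _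

lemma exists_clm_ae_eq_affineProj (n k : ℕ) :
    ∃ P : Hbd n →L[ℂ] Hbd n, ∀ F, P F =ᵐ[volume] affineProj k F :=
  exists_clm_ae_eq_apply (affineProjEval k)
    (fun F ↦ (measurable_affineProj k F).aestronglyMeasurable) ((4 * (n + 1)) ^ 2) fun F ↦ by
      refine (lintegral_affineProj_sq_le k (Lp.aestronglyMeasurable F)).trans_eq ?_
      rw [lintegral_enorm_sq_eq_norm_sq (ae_eq_refl F), ENNReal.ofReal_mul (by positivity)]
      congr 1
      norm_cast

/-- `affineProj k` as a bounded operator on `L²`. -/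
def affineProjLp (n k : ℕ) : Hbd n →L[ℂ] Hbd n := (exists_clm_ae_eq_affineProj n k).choose

lemma coeFn_affineProjLp (k : ℕ) (F : Hbd n) : affineProjLp n k F =ᵐ[volume] affineProj k F :=
  (exists_clm_ae_eq_affineProj n k).choose_spec F

lemma affineProjEval_succ (k : ℕ) (x : Bdy n) :
    affineProjEval (k + 1) x =
      affineProjEval k x + affineProjEval (k + 1) x ∘L (1 - affineProjLp n k) := by
  ext F
  have h : affineProj (k + 1) (affineProjLp n k F) = affineProj k F := by
    rw [affineProj_congr_ae (coeFn_affineProjLp k F), affineProj_succ_affineProj]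
  simp only [add_apply, ContinuousLinearMap.comp_apply, sub_apply,
    map_sub, one_apply_eq_self, affineProjEval_apply, h, add_sub_cancel]

end AffineProjectionOnLp

section ProductsWithProbabilityMeasures

variable {X Y E : Type*} [MeasurableSpace X] [MeasurableSpace Y] [NormedAddCommGroup E]
  {μ : Measure X} [IsProbabilityMeasure μ] {ν : Measure Y} [SFinite ν]

lemma enorm_integral_sq_le [NormedSpace ℝ E] {f : X → E} (hf : AEStronglyMeasurable f μ) :
    ‖∫ x, f x ∂μ‖ₑ ^ 2 ≤ ∫⁻ x, ‖f x‖ₑ ^ 2 ∂μ := by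
  have h := sq_lintegral_le μ hf.enorm
  rw [measure_univ, one_mul] at h
  refine le_trans ?_ h
  gcongr
  exact enorm_integral_le_lintegral_enorm f

lemma memLp_two_integral_prod_left [NormedSpace ℝ E] {f : X × Y → E}
    (hf : MemLp f 2 (μ.prod ν)) : MemLp (fun y ↦ ∫ x, f (x, y) ∂μ) 2 ν := by
  refine (memLp_two_iff_lintegral_enorm_sq hf.1.prod_swap.integral_prod_right').2 ?_
  calc ∫⁻ y, ‖∫ x, f (x, y) ∂μ‖ₑ ^ 2 ∂ν ≤ ∫⁻ y, ∫⁻ x, ‖f (x, y)‖ₑ ^ 2 ∂μ ∂ν := by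
        refine lintegral_mono_ae (hf.1.prod_swap.prodMk_left.mono fun y hy ↦ ?_)
        exact enorm_integral_sq_le hy
    _ = ∫⁻ p, ‖f p‖ₑ ^ 2 ∂μ.prod ν := (lintegral_prod_symm _ (hf.1.enorm.pow_const 2)).symm
    _ < ⊤ := lintegral_enorm_sq_lt_top hf

lemma ae_integrable_of_memLp_two_prod {f : X × Y → E} (hf : MemLp f 2 (μ.prod ν)) :
    ∀ᵐ y ∂ν, Integrable (fun x ↦ f (x, y)) μ := by
  have hsq := hf.1.enorm.pow_const 2
  have hfin := lintegral_enorm_sq_lt_top hf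
  rw [lintegral_prod_symm _ hsq] at hfin
  filter_upwards [hf.1.prod_swap.prodMk_left, ae_lt_top' hsq.lintegral_prod_left' hfin.ne]
    with y hmeas hlt
  exact ((memLp_two_iff_lintegral_enorm_sq hmeas).2 hlt).integrable one_le_two

end ProductsWithProbabilityMeasures

section WeakTaylorFormula

variable {n : ℕ} {φ : Bdy n → ℝ} {f : Bdy n → ℂ} {g : Fin n → Bdy n → ℂ} {v : Bdy n}

lemma IsTestB.memLp_ofReal (hφ : IsTestB n φ) (p : ENNReal) : MemLp (fun y ↦ (φ y : ℂ)) p volume :=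
  (Complex.continuous_ofReal.comp hφ.1.continuous).memLp_of_hasCompactSupport
    (hφ.2.comp_left Complex.ofReal_zero)

lemma IsTestB.integrable_mul (hφ : IsTestB n φ) (hf : MemLp f 2 volume) :
    Integrable fun y ↦ f y * (φ y : ℂ) :=
  hf.integrable_mul (hφ.memLp_ofReal 2)

lemma IsTestB.fderiv_apply (hφ : IsTestB n φ) (v : Bdy n) :
    IsTestB n fun y ↦ fderiv ℝ φ y v :=
  ⟨(hφ.1.fderiv_right (by simp)).clm_apply contDiff_const,
    (hφ.2.fderiv (𝕜 := ℝ)).comp_left (g := fun L : Bdy n →L[ℝ] ℝ ↦ L v) (zero_apply v)⟩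

lemma IsTestB.comp_sub (hφ : IsTestB n φ) (a : Bdy n) : IsTestB n fun y ↦ φ (y - a) :=
  ⟨hφ.1.comp (contDiff_id.sub contDiff_const),
    hφ.2.comp_homeomorph (Homeomorph.subRight a)⟩

lemma isWeakDerivB_sum_smul (hf : MemLp f 2 volume) (hg : ∀ i, MemLp (g i) 2 volume)
    (hderiv : ∀ i, IsWeakDerivB n (bdirs n i) f (g i)) (v : Bdy n) :
    IsWeakDerivB n v f fun y ↦ ∑ i, g i y * (v i : ℂ) := by
  intro φ hφ
  have hv : v = ∑ i, v i • bdirs n i := by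
    ext j
    simp [bdirs, Pi.single_apply]
  have hfderiv (y : Bdy n) : f y * (fderiv ℝ φ y v : ℂ) =
      ∑ i, (v i : ℂ) * (f y * (fderiv ℝ φ y (bdirs n i) : ℂ)) := by
    conv_lhs => rw [hv]
    simp only [map_sum, map_smul, smul_eq_mul, Complex.ofReal_sum, Complex.ofReal_mul,
      Finset.mul_sum]
    exact Finset.sum_congr rfl fun i _ ↦ by ring
  have hgrad (y : Bdy n) : (∑ i, g i y * (v i : ℂ)) * (φ y : ℂ) =
      ∑ i, (v i : ℂ) * (g i y * (φ y : ℂ)) := by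
    rw [Finset.sum_mul]
    exact Finset.sum_congr rfl fun i _ ↦ by ring
  simp only [hfderiv, hgrad]
  rw [integral_finsetSum _ fun i _ ↦ ((hφ.fderiv_apply _).integrable_mul hf).const_mul _,
    integral_finsetSum _ fun i _ ↦ (hφ.integrable_mul (hg i)).const_mul _, ← Finset.sum_neg_distrib]
  refine Finset.sum_congr rfl fun i _ ↦ ?_
  rw [integral_const_mul, integral_const_mul, hderiv i φ hφ, mul_neg]

/-- The law of a uniform random time in `(0, 1]`, in which segments are parametrized. -/
def uniformTime : Measure ℝ := volume.restrict (Set.Ioc 0 1)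

instance : IsProbabilityMeasure uniformTime := ⟨by simp [uniformTime]⟩

lemma measurePreserving_add_smul (v : Bdy n) :
    MeasurePreserving (fun p : ℝ × Bdy n ↦ (p.1, p.2 + p.1 • v))
      (uniformTime.prod volume) (uniformTime.prod volume) :=
  (MeasurePreserving.id uniformTime).skew_product (g := fun t y ↦ y + t • v) (by fun_prop)
    (.of_forall fun t ↦ map_add_right_eq_self volume (t • v))

lemma memLp_comp_add_smul {p : ENNReal} (hf : MemLp f p volume) (v : Bdy n) :
    MemLp (fun q : ℝ × Bdy n ↦ f (q.2 + q.1 • v)) p (uniformTime.prod volume) :=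
  (hf.comp_snd uniformTime).comp_measurePreserving (measurePreserving_add_smul v)

lemma IsTestB.sub_apply_eq_integral (hφ : IsTestB n φ) (v y : Bdy n) :
    φ y - φ (y - v) = ∫ t, fderiv ℝ φ (y - t • v) v ∂uniformTime := by
  have hderiv (t : ℝ) :
      HasDerivAt (fun t : ℝ ↦ φ (y - t • v)) (-fderiv ℝ φ (y - t • v) v) t := by
    have hline : HasDerivAt (fun t : ℝ ↦ y - t • v) (-v) t := by
      simpa using ((hasDerivAt_id t).smul_const v).const_sub y
    rw [← map_neg]
    exact (hφ.1.differentiable (by simp) _).hasFDerivAt.comp_hasDerivAt t hline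
  have hcont : Continuous fun t : ℝ ↦ fderiv ℝ φ (y - t • v) v :=
    (hφ.fderiv_apply v).1.continuous.comp (f := fun t : ℝ ↦ y - t • v) (by fun_prop)
  have hftc := intervalIntegral.integral_eq_sub_of_hasDerivAt (a := 0) (b := 1)
    (fun t _ ↦ hderiv t) (hcont.neg.intervalIntegrable _ _)
  rw [intervalIntegral.integral_of_le zero_le_one, integral_neg, one_smul, zero_smul,
    sub_zero] at hftc
  rw [uniformTime, ← neg_sub, ← hftc, neg_neg]

variable {G : Bdy n → ℂ}

lemma IsWeakDerivB.integral_mul_fderiv_sub_smul (hderiv : IsWeakDerivB n v f G)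
    (hφ : IsTestB n φ) (t : ℝ) :
    ∫ y, f y * (fderiv ℝ φ (y - t • v) v : ℂ) = -∫ y, G (y + t • v) * (φ y : ℂ) := by
  have h := hderiv _ (hφ.comp_sub (t • v))
  simp only [fderiv_comp_sub] at h
  rw [h, ← integral_add_right_eq_self (fun y ↦ G y * (φ (y - t • v) : ℂ)) (t • v)]
  simp only [add_sub_cancel_right]

lemma IsWeakDerivB.integral_mul_comp_sub (hf : MemLp f 2 volume) (hG : MemLp G 2 volume)
    (hderiv : IsWeakDerivB n v f G) (hφ : IsTestB n φ) :
    ∫ y, f y * ((φ (y - v) : ℂ) - φ y) =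
      ∫ y, (∫ t, G (y + t • v) ∂uniformTime) * (φ y : ℂ) := by
  have hleft : Integrable (fun p : ℝ × Bdy n ↦ f p.2 * (fderiv ℝ φ (p.2 - p.1 • v) v : ℂ))
      (uniformTime.prod volume) := by
    refine ((hf.comp_snd uniformTime).integrable_mul
      (memLp_comp_add_smul ((hφ.fderiv_apply v).memLp_ofReal 2) (-v))).congr
        (.of_forall fun p ↦ ?_)
    simp only [Pi.mul_apply, smul_neg, sub_eq_add_neg]
  have hright : Integrable (fun p : ℝ × Bdy n ↦ G (p.2 + p.1 • v) * (φ p.2 : ℂ))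
      (uniformTime.prod volume) :=
    (memLp_comp_add_smul hG v).integrable_mul ((hφ.memLp_ofReal 2).comp_snd uniformTime)
  calc ∫ y, f y * ((φ (y - v) : ℂ) - φ y)
      = -∫ y, ∫ t, f y * (fderiv ℝ φ (y - t • v) v : ℂ) ∂uniformTime := by
        rw [← integral_neg]
        refine integral_congr_ae (.of_forall fun y ↦ ?_)
        simp only
        rw [integral_const_mul, integral_complex_ofReal, ← hφ.sub_apply_eq_integral]
        push_cast
        ring
    _ = -∫ t, (∫ y, f y * (fderiv ℝ φ (y - t • v) v : ℂ)) ∂uniformTime := by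
        rw [integral_integral_swap (f := fun y t ↦ f y * (fderiv ℝ φ (y - t • v) v : ℂ)) hleft.swap]
    _ = ∫ t, (∫ y, G (y + t • v) * (φ y : ℂ)) ∂uniformTime := by
        simp only [hderiv.integral_mul_fderiv_sub_smul hφ, integral_neg, neg_neg]
    _ = ∫ y, (∫ t, G (y + t • v) ∂uniformTime) * (φ y : ℂ) := by
        rw [integral_integral_swap (f := fun t y ↦ G (y + t • v) * (φ y : ℂ)) hright]
        simp only [integral_mul_const]

lemma IsWeakDerivB.ae_sub_eq_integral (hf : MemLp f 2 volume) (hG : MemLp G 2 volume)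
    (hderiv : IsWeakDerivB n v f G) :
    ∀ᵐ y, f (y + v) - f y = ∫ t, G (y + t • v) ∂uniformTime := by
  have hshift : MemLp (fun y ↦ f (y + v)) 2 volume :=
    hf.comp_measurePreserving (measurePreserving_add_right volume v)
  have hmean : MemLp (fun y ↦ ∫ t, G (y + t • v) ∂uniformTime) 2 volume :=
    memLp_two_integral_prod_left (memLp_comp_add_smul hG v)
  suffices h : ∀ᵐ y, f (y + v) - f y - ∫ t, G (y + t • v) ∂uniformTime = 0 from
    h.mono fun y ↦ sub_eq_zero.1
  refine ae_eq_zero_of_integral_contDiff_smul_eq_zero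
    (((hshift.sub hf).sub hmean).locallyIntegrable one_le_two) fun φ hφsmooth hφsupp ↦ ?_
  have hφ : IsTestB n φ := ⟨hφsmooth, hφsupp⟩
  have hswap : ∫ y, f (y + v) * (φ y : ℂ) = ∫ y, f y * (φ (y - v) : ℂ) := by
    rw [← integral_add_right_eq_self (fun y ↦ f y * (φ (y - v) : ℂ)) v]
    simp only [add_sub_cancel_right]
  have hpair := hderiv.integral_mul_comp_sub hf hG hφ
  simp only [mul_sub] at hpair
  rw [integral_sub ((hφ.comp_sub v).integrable_mul hf) (hφ.integrable_mul hf), ← hswap] at hpair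
  simp only [Complex.real_smul, mul_comm _ (_ - _), sub_mul]
  have hdiff : Integrable fun y ↦ f (y + v) * (φ y : ℂ) - f y * (φ y : ℂ) :=
    (hφ.integrable_mul hshift).sub (hφ.integrable_mul hf)
  rw [integral_sub hdiff (hφ.integrable_mul hmean), integral_sub (hφ.integrable_mul hshift)
    (hφ.integrable_mul hf), hpair, sub_self]

lemma enorm_sum_mul_ofReal_sq_le (a : Fin n → ℂ) (v : Bdy n) :
    ‖∑ i, a i * (v i : ℂ)‖ₑ ^ 2 ≤ n * ‖v‖ₑ ^ 2 * ∑ i, ‖a i‖ₑ ^ 2 := by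
  have hpow := ENNReal.rpow_sum_le_const_mul_sum_rpow Finset.univ (fun i ↦ ‖a i‖ₑ) one_le_two
  norm_num at hpow
  calc ‖∑ i, a i * (v i : ℂ)‖ₑ ^ 2 ≤ (‖v‖ₑ * ∑ i, ‖a i‖ₑ) ^ 2 := by
        gcongr
        rw [Finset.mul_sum]
        refine (enorm_sum_le _ _).trans (Finset.sum_le_sum fun i _ ↦ ?_)
        rw [enorm_mul, mul_comm]
        gcongr
        rw [enorm_le_iff_norm_le, Complex.norm_real]
        exact PiLp.norm_apply_le v i
    _ ≤ ‖v‖ₑ ^ 2 * (n * ∑ i, ‖a i‖ₑ ^ 2) := by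
        rw [mul_pow]
        gcongr
    _ = n * ‖v‖ₑ ^ 2 * ∑ i, ‖a i‖ₑ ^ 2 := by ring

/-- The squared `L²` modulus of continuity of `g` for the shift `v`. -/
def sqModulus (g : Bdy n → ℂ) (v : Bdy n) : ENNReal := ∫⁻ y, ‖g (y + v) - g y‖ₑ ^ 2

/-- The squared `L²` norm of the first-order Taylor remainder for the increment `v`. -/
def taylorErrorSq (f : Bdy n → ℂ) (g : Fin n → Bdy n → ℂ) (v : Bdy n) : ENNReal :=
  ∫⁻ y, ‖f (y + v) - f y - ∑ i, g i y * (v i : ℂ)‖ₑ ^ 2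

lemma taylorErrorSq_le (hf : MemLp f 2 volume) (hg : ∀ i, MemLp (g i) 2 volume)
    (hderiv : ∀ i, IsWeakDerivB n (bdirs n i) f (g i)) (v : Bdy n) :
    taylorErrorSq f g v ≤
      n * ‖v‖ₑ ^ 2 * ∑ i, ∫⁻ t, sqModulus (g i) (t • v) ∂uniformTime := by
  set G : Bdy n → ℂ := fun y ↦ ∑ i, g i y * (v i : ℂ)
  have hG : MemLp G 2 volume := memLp_finsetSum _ fun i _ ↦ (hg i).mul_const _
  have hdiff (i : Fin n) : AEMeasurable
      (fun p : ℝ × Bdy n ↦ ‖g i (p.2 + p.1 • v) - g i p.2‖ₑ ^ 2) (uniformTime.prod volume) :=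
    ((memLp_comp_add_smul (hg i) v).sub ((hg i).comp_snd uniformTime)).1.enorm.pow_const 2
  have hremainder : ∀ᵐ y, ‖f (y + v) - f y - G y‖ₑ ^ 2 ≤
      ∫⁻ t, n * ‖v‖ₑ ^ 2 * ∑ i, ‖g i (y + t • v) - g i y‖ₑ ^ 2 ∂uniformTime := by
    filter_upwards [ae_integrable_of_memLp_two_prod (memLp_comp_add_smul hG v),
      (isWeakDerivB_sum_smul hf hg hderiv v).ae_sub_eq_integral hf hG] with y hint htaylor
    have hmean : f (y + v) - f y - G y = ∫ t, (G (y + t • v) - G y) ∂uniformTime := by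
      rw [integral_sub hint (integrable_const _), integral_const, probReal_univ,
        one_smul, htaylor]
    have hmeas : AEStronglyMeasurable (fun t ↦ G (y + t • v) - G y) uniformTime :=
      hint.1.sub aestronglyMeasurable_const
    rw [hmean]
    refine (enorm_integral_sq_le hmeas).trans (lintegral_mono fun t ↦ ?_)
    have hincrement : G (y + t • v) - G y = ∑ i, (g i (y + t • v) - g i y) * (v i : ℂ) := by
      simp only [G, sub_mul, Finset.sum_sub_distrib]
    rw [hincrement]
    exact enorm_sum_mul_ofReal_sq_le _ v
  have hconst : (n * ‖v‖ₑ ^ 2 : ENNReal) ≠ ⊤ := by finiteness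
  calc taylorErrorSq f g v
      ≤ ∫⁻ y, ∫⁻ t, n * ‖v‖ₑ ^ 2 * ∑ i, ‖g i (y + t • v) - g i y‖ₑ ^ 2 ∂uniformTime :=
        lintegral_mono_ae hremainder
    _ = ∫⁻ p, n * ‖v‖ₑ ^ 2 * ∑ i, ‖g i (p.2 + p.1 • v) - g i p.2‖ₑ ^ 2
          ∂uniformTime.prod volume :=
        (lintegral_prod_symm _ ((Finset.aemeasurable_fun_sum _ fun i _ ↦ hdiff i).const_mul _)).symm
    _ = n * ‖v‖ₑ ^ 2 * ∑ i, ∫⁻ t, sqModulus (g i) (t • v) ∂uniformTime := by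
        rw [lintegral_const_mul' _ _ hconst, lintegral_finsetSum' _ fun i _ ↦ hdiff i]
        simp only [lintegral_prod _ (hdiff _), sqModulus]

end WeakTaylorFormula

section DyadicBalls

lemma sum_range_pow_le_two_mul {a : ENNReal} (ha : 2 ≤ a) (N : ℕ) :
    ∑ k ∈ Finset.range (N + 1), a ^ k ≤ 2 * a ^ N := by
  induction N with
  | zero => simp
  | succ N ih =>
    calc ∑ k ∈ Finset.range (N + 2), a ^ k ≤ a * a ^ N + a ^ (N + 1) := by
          rw [Finset.sum_range_succ]
          gcongr
          exact ih.trans (by gcongr)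
      _ = 2 * a ^ (N + 1) := by ring

lemma tsum_ite_two_pow_le {m : ℕ} (hm : m ≠ 0) (Z : ENNReal) :
    ∑' k : ℕ, (if (2 : ENNReal) ^ k ≤ Z then ((2 : ENNReal) ^ m) ^ k else 0) ≤ 2 * Z ^ m := by
  refine ENNReal.tsum_le_of_sum_range_le fun N ↦ ?_
  induction N with
  | zero => simp
  | succ N ih =>
    by_cases h : (2 : ENNReal) ^ N ≤ Z
    · calc ∑ k ∈ Finset.range (N + 1),
            (if (2 : ENNReal) ^ k ≤ Z then ((2 : ENNReal) ^ m) ^ k else 0)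
          ≤ ∑ k ∈ Finset.range (N + 1), ((2 : ENNReal) ^ m) ^ k :=
            Finset.sum_le_sum fun k _ ↦ by split_ifs <;> simp
        _ ≤ 2 * ((2 : ENNReal) ^ m) ^ N := sum_range_pow_le_two_mul (le_self_pow₀ one_le_two hm) N
        _ = 2 * ((2 : ENNReal) ^ N) ^ m := by rw [pow_right_comm]
        _ ≤ 2 * Z ^ m := by gcongr
    · rw [Finset.sum_range_succ, if_neg h, add_zero]
      exact ih

variable {E : Type*} [NormedAddCommGroup E]

lemma mem_closedBall_zero_div_two_pow_iff {r : ℝ} (hr : 0 < r) {x : E} {k : ℕ} :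
    x ∈ Metric.closedBall 0 (r / 2 ^ k) ↔ (2 : ENNReal) ^ k ≤ ENNReal.ofReal r / ‖x‖ₑ := by
  rw [ENNReal.le_div_iff_mul_le (.inr (by simpa)) (.inl enorm_ne_top), mem_closedBall_zero_iff,
    le_div_iff₀ (by positivity), mul_comm, ← ofReal_norm, ← ENNReal.ofReal_ofNat 2,
    ← ENNReal.ofReal_pow zero_le_two, ← ENNReal.ofReal_mul (by positivity),
    ENNReal.ofReal_le_ofReal_iff hr.le]

lemma tsum_pow_mul_setLIntegral_closedBall_le [MeasurableSpace E] [OpensMeasurableSpace E]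
    {μ : Measure E} {h : E → ENNReal} (hh : AEMeasurable h μ) {m : ℕ} (hm : m ≠ 0) {r : ℝ}
    (hr : 0 < r) :
    ∑' k : ℕ, ((2 : ENNReal) ^ m) ^ k * ∫⁻ x in Metric.closedBall 0 (r / 2 ^ k), h x ∂μ ≤
      2 * ENNReal.ofReal r ^ m * ∫⁻ x, (‖x‖ₑ ^ m)⁻¹ * h x ∂μ := by
  classical
  have hball (k : ℕ) : MeasurableSet (Metric.closedBall (0 : E) (r / 2 ^ k)) :=
    Metric.isClosed_closedBall.measurableSet
  have hweight (k : ℕ) (x : E) :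
      (Metric.closedBall 0 (r / 2 ^ k)).indicator (fun x ↦ ((2 : ENNReal) ^ m) ^ k * h x) x =
        (if (2 : ENNReal) ^ k ≤ ENNReal.ofReal r / ‖x‖ₑ then ((2 : ENNReal) ^ m) ^ k else 0) *
          h x := by
    simp only [Set.indicator_apply, mem_closedBall_zero_div_two_pow_iff hr, ite_mul, zero_mul]
  calc ∑' k : ℕ, ((2 : ENNReal) ^ m) ^ k * ∫⁻ x in Metric.closedBall 0 (r / 2 ^ k), h x ∂μ
      = ∫⁻ x, ∑' k : ℕ, (Metric.closedBall 0 (r / 2 ^ k)).indicator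
          (fun x ↦ ((2 : ENNReal) ^ m) ^ k * h x) x ∂μ := by
        rw [lintegral_tsum fun k ↦ (hh.const_mul _).indicator (hball k)]
        refine tsum_congr fun k ↦ ?_
        rw [lintegral_indicator (hball k), lintegral_const_mul' _ _ (by finiteness)]
    _ ≤ ∫⁻ x, 2 * (ENNReal.ofReal r / ‖x‖ₑ) ^ m * h x ∂μ := by
        simp only [hweight, ENNReal.tsum_mul_right]
        gcongr
        exact tsum_ite_two_pow_le hm _
    _ = 2 * ENNReal.ofReal r ^ m * ∫⁻ x, (‖x‖ₑ ^ m)⁻¹ * h x ∂μ := by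
        rw [← lintegral_const_mul' _ _ (by finiteness)]
        simp only [div_eq_mul_inv, mul_pow, ENNReal.inv_pow, mul_assoc]

end DyadicBalls

section GagliardoSeminorm

variable {n : ℕ} {f g : Bdy n → ℂ}

lemma aestronglyMeasurable_comp_add (hg : AEStronglyMeasurable g volume) :
    AEStronglyMeasurable (fun p : Bdy n × Bdy n ↦ g (p.2 + p.1)) (volume.prod volume) :=
  hg.comp_snd.comp_measurePreserving (measurePreserving_prod_add_right volume volume)

lemma aestronglyMeasurable_increment (hg : AEStronglyMeasurable g volume) :
    AEStronglyMeasurable (fun p : Bdy n × Bdy n ↦ g (p.2 + p.1) - g p.2) (volume.prod volume) :=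
  (aestronglyMeasurable_comp_add hg).sub hg.comp_snd

lemma measurable_sqModulus (hg : AEStronglyMeasurable g volume) : Measurable (sqModulus g) := by
  have hmk : sqModulus g = sqModulus (hg.mk g) := by
    funext v
    refine lintegral_congr_ae ?_
    filter_upwards [hg.ae_eq_mk, (measurePreserving_add_right volume v).quasiMeasurePreserving.ae
      hg.ae_eq_mk] with y hy hshift
    rw [hy, hshift]
  have hmeas := hg.stronglyMeasurable_mk.measurable
  have hincr : Measurable fun p : Bdy n × Bdy n ↦ ‖hg.mk g (p.2 + p.1) - hg.mk g p.2‖ₑ ^ 2 :=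
    ((hmeas.comp (measurable_snd.add measurable_fst)).sub
      (hmeas.comp measurable_snd)).enorm.pow_const 2
  rw [hmk]
  exact hincr.lintegral_prod_right'

/-- The squared Gagliardo seminorm of order `1/2`, written as a weighted integral of the `L²`
modulus of continuity. -/
def gagliardoSq (g : Bdy n → ℂ) : ENNReal := ∫⁻ v, (‖v‖ₑ ^ (n + 1))⁻¹ * sqModulus g v

lemma enorm_gagliardo_kernel (x y : Bdy n) :
    ‖‖g x - g y‖ ^ 2 / ‖x - y‖ ^ ((n : ℝ) + 1)‖ₑ = (‖x - y‖ₑ ^ (n + 1))⁻¹ * ‖g x - g y‖ₑ ^ 2 := by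
  rcases eq_or_ne x y with rfl | hxy
  · simp
  have hpos : 0 < ‖x - y‖ := norm_sub_pos_iff.2 hxy
  rw [← Nat.cast_add_one, Real.rpow_natCast, Real.enorm_of_nonneg (by positivity), div_eq_inv_mul,
    ENNReal.ofReal_mul (by positivity), ENNReal.ofReal_inv_of_pos (by positivity),
    ENNReal.ofReal_pow hpos.le, ENNReal.ofReal_pow (norm_nonneg _), ofReal_norm, ofReal_norm]

lemma gagliardoSq_eq_lintegral (hg : AEStronglyMeasurable g volume) :
    gagliardoSq g = ∫⁻ y : Bdy n, ∫⁻ x, (‖x - y‖ₑ ^ (n + 1))⁻¹ * ‖g x - g y‖ₑ ^ 2 := by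
  have hmeas : AEMeasurable
      (fun p : Bdy n × Bdy n ↦ (‖p.1‖ₑ ^ (n + 1))⁻¹ * ‖g (p.2 + p.1) - g p.2‖ₑ ^ 2)
      (volume.prod volume) :=
    (measurable_fst.enorm.pow_const _).inv.aemeasurable.mul
      ((aestronglyMeasurable_increment hg).enorm.pow_const 2)
  calc gagliardoSq g
      = ∫⁻ v : Bdy n, ∫⁻ y, (‖v‖ₑ ^ (n + 1))⁻¹ * ‖g (y + v) - g y‖ₑ ^ 2 := by
        refine lintegral_congr fun v ↦ (lintegral_const_mul'' _ ?_).symm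
        exact ((hg.comp_measurePreserving (measurePreserving_add_right volume v)).sub
          hg).enorm.pow_const 2
    _ = ∫⁻ y : Bdy n, ∫⁻ v, (‖v‖ₑ ^ (n + 1))⁻¹ * ‖g (y + v) - g y‖ₑ ^ 2 :=
        lintegral_lintegral_swap hmeas
    _ = ∫⁻ y : Bdy n, ∫⁻ x, (‖x - y‖ₑ ^ (n + 1))⁻¹ * ‖g x - g y‖ₑ ^ 2 := by
        refine lintegral_congr fun y ↦ ?_
        rw [← lintegral_add_left_eq_self
          (fun x : Bdy n ↦ (‖x - y‖ₑ ^ (n + 1))⁻¹ * ‖g x - g y‖ₑ ^ 2) y]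
        simp only [add_sub_cancel_left]

lemma GagB.gagliardoSq_lt_top (hg : AEStronglyMeasurable g volume) (hG : GagB n g) :
    gagliardoSq g < ⊤ := by
  have hfin := hG.2
  rw [HasFiniteIntegral, lintegral_prod_symm _ hG.1.enorm] at hfin
  simpa only [enorm_gagliardo_kernel, gagliardoSq_eq_lintegral hg] using hfin

lemma lintegral_comp_smul {h : Bdy n → ENNReal} {t : ℝ} (ht : t ≠ 0) :
    ∫⁻ v, h (t • v) = ENNReal.ofReal |(t ^ n)⁻¹| * ∫⁻ v, h v := by
  have hemb : MeasurableEmbedding fun v : Bdy n ↦ t • v :=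
    (Homeomorph.smulOfNeZero t ht).measurableEmbedding
  rw [← hemb.lintegral_map h]
  simp [Measure.map_addHaar_smul volume ht]

lemma lintegral_weight_mul_sqModulus_smul_le {t : ℝ} (ht : t ∈ Set.Ioc (0 : ℝ) 1) :
    ∫⁻ v : Bdy n, (‖v‖ₑ ^ (n + 1))⁻¹ * sqModulus g (t • v) ≤ gagliardoSq g := by
  have hpow : ENNReal.ofReal t ^ (n + 1) ≠ 0 := by simp [ht.1]
  have hpow_top : ENNReal.ofReal t ^ (n + 1) ≠ ⊤ := by finiteness
  have hweight (v : Bdy n) : (‖v‖ₑ ^ (n + 1))⁻¹ =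
      ENNReal.ofReal t ^ (n + 1) * (‖t • v‖ₑ ^ (n + 1))⁻¹ := by
    rw [enorm_smul, Real.enorm_of_nonneg ht.1.le, mul_pow,
      ENNReal.mul_inv (.inl hpow) (.inl hpow_top), ← mul_assoc,
      ENNReal.mul_inv_cancel hpow hpow_top, one_mul]
  have hscale : ENNReal.ofReal t ^ (n + 1) * ENNReal.ofReal |(t ^ n)⁻¹| = ENNReal.ofReal t := by
    have ht0 : 0 < t := ht.1
    have htn : 0 < t ^ n := pow_pos ht0 n
    rw [abs_of_pos (inv_pos.2 htn), ← ENNReal.ofReal_pow ht.1.le,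
      ← ENNReal.ofReal_mul (by positivity), pow_succ, mul_right_comm, mul_inv_cancel₀ htn.ne',
      one_mul]
  calc ∫⁻ v : Bdy n, (‖v‖ₑ ^ (n + 1))⁻¹ * sqModulus g (t • v)
      = ENNReal.ofReal t ^ (n + 1) *
          ∫⁻ v : Bdy n, (‖t • v‖ₑ ^ (n + 1))⁻¹ * sqModulus g (t • v) := by
        rw [← lintegral_const_mul' _ _ hpow_top]
        refine lintegral_congr fun v ↦ ?_
        rw [hweight, mul_assoc]
    _ = ENNReal.ofReal t * gagliardoSq g := by
        rw [lintegral_comp_smul (h := fun v ↦ (‖v‖ₑ ^ (n + 1))⁻¹ * sqModulus g v) ht.1.ne',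
          ← mul_assoc, hscale, gagliardoSq]
    _ ≤ gagliardoSq g := mul_le_of_le_one_left' (ENNReal.ofReal_le_one.2 ht.2)

lemma lintegral_weight_mul_mean_sqModulus_le (hg : AEStronglyMeasurable g volume) :
    ∫⁻ v : Bdy n, (‖v‖ₑ ^ (n + 1))⁻¹ * ∫⁻ t, sqModulus g (t • v) ∂uniformTime ≤
      gagliardoSq g := by
  have hmeas : Measurable fun p : Bdy n × ℝ ↦ sqModulus g (p.2 • p.1) :=
    (measurable_sqModulus hg).comp (by fun_prop)
  have hweight : Measurable fun v : Bdy n ↦ (‖v‖ₑ ^ (n + 1))⁻¹ :=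
    (measurable_id.enorm.pow_const _).inv
  calc ∫⁻ v : Bdy n, (‖v‖ₑ ^ (n + 1))⁻¹ * ∫⁻ t, sqModulus g (t • v) ∂uniformTime
      = ∫⁻ v : Bdy n, ∫⁻ t, (‖v‖ₑ ^ (n + 1))⁻¹ * sqModulus g (t • v) ∂uniformTime :=
        lintegral_congr fun v ↦
          (lintegral_const_mul _ (hmeas.comp measurable_prodMk_left)).symm
    _ = ∫⁻ t, (∫⁻ v : Bdy n, (‖v‖ₑ ^ (n + 1))⁻¹ * sqModulus g (t • v)) ∂uniformTime :=
        lintegral_lintegral_swap ((hweight.comp measurable_fst).mul hmeas).aemeasurable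
    _ ≤ ∫⁻ _, gagliardoSq g ∂uniformTime :=
        setLIntegral_mono' measurableSet_Ioc fun t ht ↦ lintegral_weight_mul_sqModulus_smul_le ht
    _ = gagliardoSq g := by simp

end GagliardoSeminorm

section ApproximationInH32

variable {n : ℕ} {f : Bdy n → ℂ} {g : Fin n → Bdy n → ℂ}

/-- The first-order Taylor polynomial at `y` of a function with value `f y` and gradient `g · y`. -/
def taylorMap (f : Bdy n → ℂ) (g : Fin n → Bdy n → ℂ) (y : Bdy n) : Bdy n →ᵃ[ℝ] ℂ :=
  AffineMap.const ℝ (Bdy n) (f y) +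
    (∑ i, (EuclideanSpace.proj (𝕜 := ℝ) i).toLinearMap.smulRight (g i y)).toAffineMap.comp
      (AffineMap.id ℝ (Bdy n) - AffineMap.const ℝ (Bdy n) y)

lemma taylorMap_add (y v : Bdy n) :
    taylorMap f g y (y + v) = f y + ∑ i, g i y * (v i : ℂ) := by
  simp [taylorMap, mul_comm]

lemma aemeasurable_taylorError (hf : AEStronglyMeasurable f volume)
    (hg : ∀ i, AEStronglyMeasurable (g i) volume) :
    AEMeasurable (fun p : Bdy n × Bdy n ↦
      ‖f (p.2 + p.1) - f p.2 - ∑ i, g i p.2 * (p.1 i : ℂ)‖ₑ ^ 2) (volume.prod volume) := by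
  have hcoord (i : Fin n) : Measurable fun p : Bdy n × Bdy n ↦ (p.1 i : ℂ) :=
    Complex.measurable_ofReal.comp (by fun_prop)
  refine ((aestronglyMeasurable_increment hf).sub ?_).enorm.pow_const 2
  exact Finset.aestronglyMeasurable_fun_sum _ fun i _ ↦
    (hg i).comp_snd.mul (hcoord i).aestronglyMeasurable

lemma lintegral_sub_affineProj_sq_le_taylorErrorSq (hf : MemLp f 2 volume)
    (hg : ∀ i, AEStronglyMeasurable (g i) volume) (k : ℕ) :
    ∫⁻ x, ‖f x - affineProj k f x‖ₑ ^ 2 ≤ 2 * (1 + (4 * (n + 1)) ^ 2) * 2 ^ (k * n) *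
      ∫⁻ v in Metric.closedBall 0 ((n + 1) / 2 ^ k), taylorErrorSq f g v := by
  refine (lintegral_sub_affineProj_sq_le k hf (taylorMap f g)).trans (mul_le_mul_right ?_ _)
  have hcube (y : Bdy n) : dyadicCube k (dyadicIndex k y) ⊆
      Metric.closedBall y ((n + 1) / 2 ^ k) := fun x hx ↦ by
    rw [mem_closedBall_iff_norm]
    refine (norm_sub_le_of_mem_dyadicCube hx (mem_dyadicCube_dyadicIndex k y)).trans ?_
    gcongr
    exact Real.sqrt_le_iff.2 ⟨by positivity, by nlinarith [(n.cast_nonneg : (0 : ℝ) ≤ n)]⟩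
  have htranslate (y : Bdy n) :
      ∫⁻ x in Metric.closedBall y ((n + 1) / 2 ^ k), ‖f x - taylorMap f g y x‖ₑ ^ 2 =
        ∫⁻ v in Metric.closedBall 0 ((n + 1) / 2 ^ k),
          ‖f (y + v) - f y - ∑ i, g i y * (v i : ℂ)‖ₑ ^ 2 := by
    rw [← (measurePreserving_add_left volume y).setLIntegral_comp_preimage_emb
      (measurableEmbedding_addLeft y)]
    simp only [taylorMap_add, preimage_add_closedBall, sub_self, sub_sub]
  calc ∫⁻ y, ∫⁻ x in dyadicCube k (dyadicIndex k y), ‖f x - taylorMap f g y x‖ₑ ^ 2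
      ≤ ∫⁻ y, ∫⁻ v in Metric.closedBall 0 ((n + 1) / 2 ^ k),
          ‖f (y + v) - f y - ∑ i, g i y * (v i : ℂ)‖ₑ ^ 2 :=
        lintegral_mono fun y ↦ (lintegral_mono_set (hcube y)).trans_eq (htranslate y)
    _ = ∫⁻ v in Metric.closedBall 0 ((n + 1) / 2 ^ k), taylorErrorSq f g v := by
        refine lintegral_lintegral_swap ?_
        exact (aemeasurable_taylorError hf.1 hg).prod_swap.mono_measure
          (Measure.prod_mono le_rfl Measure.restrict_le_self)

lemma lintegral_weight_mul_taylorErrorSq_le (hf : MemLp f 2 volume)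
    (hg : ∀ i, MemLp (g i) 2 volume) (hderiv : ∀ i, IsWeakDerivB n (bdirs n i) f (g i)) :
    ∫⁻ v, (‖v‖ₑ ^ (n + 3))⁻¹ * taylorErrorSq f g v ≤ n * ∑ i, gagliardoSq (g i) := by
  have hmeas (i : Fin n) : AEMeasurable
      (fun v : Bdy n ↦ (‖v‖ₑ ^ (n + 1))⁻¹ * ∫⁻ t, sqModulus (g i) (t • v) ∂uniformTime) volume := by
    have hscaled : Measurable fun p : Bdy n × ℝ ↦ sqModulus (g i) (p.2 • p.1) :=
      (measurable_sqModulus (hg i).1).comp (by fun_prop)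
    exact ((measurable_id.enorm.pow_const _).inv.mul hscaled.lintegral_prod_right').aemeasurable
  have hweight (v : Bdy n) : (‖v‖ₑ ^ (n + 3))⁻¹ * ‖v‖ₑ ^ 2 ≤ (‖v‖ₑ ^ (n + 1))⁻¹ := by
    rw [pow_add ‖v‖ₑ (n + 1) 2, ENNReal.mul_inv (.inr (by finiteness)) (.inl (by finiteness)),
      mul_assoc]
    exact mul_le_of_le_one_right' (ENNReal.inv_mul_le_one _)
  calc ∫⁻ v, (‖v‖ₑ ^ (n + 3))⁻¹ * taylorErrorSq f g v
      ≤ ∫⁻ v : Bdy n, n * ∑ i,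
          (‖v‖ₑ ^ (n + 1))⁻¹ * ∫⁻ t, sqModulus (g i) (t • v) ∂uniformTime := by
        refine lintegral_mono fun v ↦ ?_
        calc (‖v‖ₑ ^ (n + 3))⁻¹ * taylorErrorSq f g v
            ≤ (‖v‖ₑ ^ (n + 3))⁻¹ * (n * ‖v‖ₑ ^ 2 *
                ∑ i, ∫⁻ t, sqModulus (g i) (t • v) ∂uniformTime) := by
              gcongr
              exact taylorErrorSq_le hf hg hderiv v
          _ = n * (((‖v‖ₑ ^ (n + 3))⁻¹ * ‖v‖ₑ ^ 2) *
                ∑ i, ∫⁻ t, sqModulus (g i) (t • v) ∂uniformTime) := by ring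
          _ ≤ n * ∑ i, (‖v‖ₑ ^ (n + 1))⁻¹ *
                ∫⁻ t, sqModulus (g i) (t • v) ∂uniformTime := by
              rw [← Finset.mul_sum]
              gcongr
              exact hweight v
    _ ≤ n * ∑ i, gagliardoSq (g i) := by
        rw [lintegral_const_mul' _ _ (by finiteness), lintegral_finsetSum' _ fun i _ ↦ hmeas i]
        gcongr with i
        exact lintegral_weight_mul_mean_sqModulus_le (hg i).1

lemma MemH32B.tsum_lintegral_sub_affineProj_sq_lt_top (h : MemH32B n f) :
    ∑' k : ℕ, 8 ^ k * ∫⁻ x, ‖f x - affineProj k f x‖ₑ ^ 2 < ⊤ := by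
  obtain ⟨hf, hgrad⟩ := h
  choose g hderiv hg hG using hgrad
  have hmeas : AEMeasurable (taylorErrorSq f g) volume :=
    (aemeasurable_taylorError hf.1 fun i ↦ (hg i).1).lintegral_prod_right'
  set c : ENNReal := 2 * (1 + (4 * (n + 1)) ^ 2)
  calc ∑' k : ℕ, 8 ^ k * ∫⁻ x, ‖f x - affineProj k f x‖ₑ ^ 2
      ≤ ∑' k : ℕ, c * ((2 ^ (n + 3)) ^ k *
          ∫⁻ v in Metric.closedBall 0 ((n + 1) / 2 ^ k), taylorErrorSq f g v) := by
        refine ENNReal.tsum_le_tsum fun k ↦ ?_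
        have hpow : (8 : ENNReal) ^ k * 2 ^ (k * n) = (2 ^ (n + 3)) ^ k := by
          rw [mul_comm k n, pow_mul, ← mul_pow, pow_add, mul_comm]
          norm_num
        calc (8 : ENNReal) ^ k * ∫⁻ x, ‖f x - affineProj k f x‖ₑ ^ 2
            ≤ 8 ^ k * (c * 2 ^ (k * n) *
                ∫⁻ v in Metric.closedBall 0 ((n + 1) / 2 ^ k), taylorErrorSq f g v) := by
              gcongr
              exact lintegral_sub_affineProj_sq_le_taylorErrorSq hf (fun i ↦ (hg i).1) k
          _ = c * ((8 ^ k * 2 ^ (k * n)) *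
                ∫⁻ v in Metric.closedBall 0 ((n + 1) / 2 ^ k), taylorErrorSq f g v) := by ring
          _ = _ := by rw [hpow]
    _ ≤ c * (2 * ENNReal.ofReal (n + 1) ^ (n + 3) * (n * ∑ i, gagliardoSq (g i))) := by
        rw [ENNReal.tsum_mul_left]
        gcongr
        refine (tsum_pow_mul_setLIntegral_closedBall_le hmeas (by omega) (by positivity)).trans ?_
        gcongr
        exact lintegral_weight_mul_taylorErrorSq_le hf hg hderiv
    _ < ⊤ := by
        have hsum : ∑ i, gagliardoSq (g i) < ⊤ :=
          ENNReal.sum_lt_top.2 fun i _ ↦ (hG i).gagliardoSq_lt_top (hg i).1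
        finiteness

lemma MemH32B.tsum_enorm_sub_affineProjLp_sq_lt_top {F : Hbd n} (hF : F =ᵐ[volume] f)
    (h : MemH32B n f) : ∑' k : ℕ, 8 ^ k * ‖F - affineProjLp n k F‖ₑ ^ 2 < ⊤ := by
  refine (tsum_congr fun k ↦ ?_).trans_lt h.tsum_lintegral_sub_affineProj_sq_lt_top
  have hdiff : F - affineProjLp n k F =ᵐ[volume] fun x ↦ f x - affineProj k f x := by
    filter_upwards [Lp.coeFn_sub F (affineProjLp n k F), hF, coeFn_affineProjLp k F]
      with x hsub hfx hproj
    rw [hsub, Pi.sub_apply, hfx, hproj, affineProj_congr_ae hF]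
  rw [lintegral_enorm_sq_eq_norm_sq hdiff, ENNReal.ofReal_pow (norm_nonneg _), ofReal_norm]

end ApproximationInH32

section UniformApproximation

lemma exists_tsum_enorm_sq_le {𝕜 E G : Type*} [NontriviallyNormedField 𝕜] [NormedAddCommGroup E]
    [NormedSpace 𝕜 E] [CompleteSpace E] [NormedAddCommGroup G] [NormedSpace 𝕜 G]
    (B : ℕ → E →L[𝕜] G) (h : ∀ u, ∑' k, ‖B k u‖ₑ ^ 2 < ⊤) :
    ∃ C : ℝ, 0 ≤ C ∧ ∀ u, ∑' k, ‖B k u‖ₑ ^ 2 ≤ ENNReal.ofReal ((C * ‖u‖) ^ 2) := by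
  have : Fact ((1 : ENNReal) ≤ 2) := ⟨one_le_two⟩
  let S (N : ℕ) : E →L[𝕜] lp (fun _ : ℕ ↦ G) 2 :=
    ∑ k ∈ Finset.range N, lp.singleContinuousLinearMap 𝕜 (fun _ ↦ G) 2 k ∘L B k
  have hS (N : ℕ) (u : E) : ‖S N u‖ₑ ^ 2 = ∑ k ∈ Finset.range N, ‖B k u‖ₑ ^ 2 := by
    have hnorm := lp.norm_sum_single (E := fun _ : ℕ ↦ G) (p := 2) (by norm_num)
      (fun k ↦ B k u) (Finset.range N)
    simp only [ENNReal.toReal_ofNat, Real.rpow_ofNat] at hnorm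
    simp only [S, sum_apply, ContinuousLinearMap.comp_apply, lp.singleContinuousLinearMap_apply,
      ← ofReal_norm, ← ENNReal.ofReal_pow (norm_nonneg _), hnorm]
    exact ENNReal.ofReal_sum_of_nonneg fun k _ ↦ sq_nonneg _
  obtain ⟨C, hC⟩ := banach_steinhaus (g := S) fun u ↦ ⟨√(∑' k, ‖B k u‖ₑ ^ 2).toReal, fun N ↦ by
    refine Real.le_sqrt_of_sq_le ?_
    rw [← ENNReal.ofReal_le_iff_le_toReal (h u).ne, ENNReal.ofReal_pow (norm_nonneg _),
      ofReal_norm, hS]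
    exact ENNReal.sum_le_tsum _⟩
  refine ⟨C, (norm_nonneg _).trans (hC 0), fun u ↦ ENNReal.tsum_le_of_sum_range_le fun N ↦ ?_⟩
  rw [← hS, ← ofReal_norm, ← ENNReal.ofReal_pow (norm_nonneg _)]
  gcongr
  exact (S N).le_of_opNorm_le (hC N) u

variable {n : ℕ} {E : Type*} [NormedAddCommGroup E] [NormedSpace ℂ E]

lemma exists_tsum_enorm_sub_affineProjLp_sq_le [CompleteSpace E] (J : E →L[ℂ] Hbd n)
    (hJ : ∀ u, ∃ f : Bdy n → ℂ, J u =ᵐ[volume] f ∧ MemH32B n f) :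
    ∃ C : ℝ, 0 ≤ C ∧ ∀ u, ∑' k : ℕ, 8 ^ k * ‖J u - affineProjLp n k (J u)‖ₑ ^ 2 ≤
      ENNReal.ofReal ((C * ‖u‖) ^ 2) := by
  let B (k : ℕ) : E →L[ℂ] Hbd n := ((√8 : ℂ) ^ k) • ((1 - affineProjLp n k) ∘L J)
  have hB (k : ℕ) (u : E) : ‖B k u‖ₑ ^ 2 = 8 ^ k * ‖J u - affineProjLp n k (J u)‖ₑ ^ 2 := by
    have hsq : ‖(√8 : ℂ) ^ k‖ₑ ^ 2 = 8 ^ k := by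
      rw [enorm_pow, ← ofReal_norm, Complex.norm_real, Real.norm_of_nonneg (Real.sqrt_nonneg 8),
        ← pow_mul, mul_comm, pow_mul, ← ENNReal.ofReal_pow (by positivity),
        Real.sq_sqrt (by norm_num), ENNReal.ofReal_ofNat]
    rw [← hsq, ← mul_pow, ← enorm_smul]
    rfl
  obtain ⟨C, hC, hle⟩ := exists_tsum_enorm_sq_le B fun u ↦ by
    obtain ⟨f, hf, hmem⟩ := hJ u
    simpa only [hB] using hmem.tsum_enorm_sub_affineProjLp_sq_lt_top hf
  exact ⟨C, hC, fun u ↦ by simpa only [hB] using hle u⟩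

lemma norm_sub_affineProjLp_comp_le {J : E →L[ℂ] Hbd n} {C : ℝ} (hC : 0 ≤ C)
    (h : ∀ u, ∑' k : ℕ, 8 ^ k * ‖J u - affineProjLp n k (J u)‖ₑ ^ 2 ≤
      ENNReal.ofReal ((C * ‖u‖) ^ 2)) (k : ℕ) :
    ‖J - affineProjLp n k ∘L J‖ ≤ C * (√8 ^ k)⁻¹ := by
  refine ContinuousLinearMap.opNorm_le_bound _ (by positivity) fun u ↦ ?_
  rw [mul_right_comm, ← div_eq_mul_inv, le_div_iff₀' (by positivity)]
  refine (pow_le_pow_iff_left₀ (by positivity) (by positivity) two_ne_zero).1 ?_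
  rw [← ENNReal.ofReal_le_ofReal_iff (by positivity), mul_pow, ← pow_mul, mul_comm k, pow_mul,
    Real.sq_sqrt (by norm_num), ENNReal.ofReal_mul (by positivity),
    ENNReal.ofReal_pow (by norm_num), ENNReal.ofReal_pow (norm_nonneg _), ofReal_norm,
    ENNReal.ofReal_ofNat]
  exact (ENNReal.le_tsum (f := fun k : ℕ ↦ 8 ^ k * ‖J u - affineProjLp n k (J u)‖ₑ ^ 2) k).trans
    (h u)

end UniformApproximation

section CompactlySupportedMultiplier

/-- Multiplication by an essentially bounded function as an operator on `L²`. -/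
def mulLp {X : Type*} [MeasurableSpace X] {μ : Measure X} {α : X → ℂ} (hα : MemLp α ⊤ μ) :
    Lp ℂ 2 μ →L[ℂ] Lp ℂ 2 μ :=
  (ContinuousLinearMap.mul ℂ ℂ).holderL μ ⊤ 2 2 hα.toLp

lemma coeFn_mulLp {X : Type*} [MeasurableSpace X] {μ : Measure X} {α : X → ℂ} (hα : MemLp α ⊤ μ)
    (F : Lp ℂ 2 μ) : mulLp hα F =ᵐ[μ] fun x ↦ α x * F x := by
  filter_upwards [(ContinuousLinearMap.mul ℂ ℂ).coeFn_holder (r := 2) hα.toLp F, hα.coeFn_toLp]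
    with x hx hαx
  rw [← hαx]
  exact hx

variable {n : ℕ}

lemma memLp_indicator_affineBasis (k : ℕ) (m : Fin n → ℤ) (b : Option (Fin n)) :
    MemLp ((dyadicCube k m).indicator fun x ↦ (affineBasis k b x : ℂ)) 2 volume := by
  rw [memLp_indicator_iff_restrict (measurableSet_dyadicCube k m)]
  refine .of_bound
    (Complex.measurable_ofReal.comp (measurable_affineBasis k b)).aestronglyMeasurable 2
    (.of_forall fun x ↦ ?_)
  rw [Complex.norm_real]
  exact norm_affineBasis_le k b x

lemma affineProj_eq_sum_indicator {k : ℕ} {s : Finset (Fin n → ℤ)} {x : Bdy n}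
    (hx : dyadicIndex k x ∈ s) (φ : Bdy n → ℂ) :
    affineProj k φ x = ∑ p ∈ s ×ˢ Finset.univ,
      ((2 : ℝ) ^ (k * n) • ∫ y in dyadicCube k p.1, affineBasis k p.2 y • φ y) *
        (dyadicCube k p.1).indicator (fun y ↦ (affineBasis k p.2 y : ℂ)) x := by
  rw [Finset.sum_product, Finset.sum_eq_single_of_mem _ hx]
  · refine Finset.sum_congr rfl fun b _ ↦ ?_
    rw [Set.indicator_of_mem (mem_dyadicCube_dyadicIndex k x), Complex.real_smul, mul_comm]
  · intro m _ hm
    refine Finset.sum_eq_zero fun b _ ↦ ?_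
    rw [Set.indicator_of_notMem fun h ↦ hm h.symm, mul_zero]

lemma mulLp_affineProjLp_mem_span {α : Bdy n → ℂ} (hα : MemLp α ⊤ volume) {k : ℕ}
    {s : Finset (Fin n → ℤ)} (hs : ∀ x, α x ≠ 0 → dyadicIndex k x ∈ s) (F : Hbd n) :
    mulLp hα (affineProjLp n k F) ∈ Submodule.span ℂ ((fun p : (Fin n → ℤ) × Option (Fin n) ↦
      mulLp hα (memLp_indicator_affineBasis k p.1 p.2).toLp) '' ((s : Set _) ×ˢ Set.univ)) := by
  let e (p : (Fin n → ℤ) × Option (Fin n)) : Hbd n := (memLp_indicator_affineBasis k p.1 p.2).toLp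
  let c (p : (Fin n → ℤ) × Option (Fin n)) : ℂ :=
    (2 : ℝ) ^ (k * n) • ∫ y in dyadicCube k p.1, affineBasis k p.2 y • F y
  have hexpand : mulLp hα (affineProjLp n k F) =
      mulLp hα (∑ p ∈ s ×ˢ Finset.univ, c p • e p) := by
    refine Lp.ext ?_
    have hterm : ∀ᵐ x, ∀ p ∈ s ×ˢ Finset.univ, (c p • e p : Hbd n) x =
        c p * (dyadicCube k p.1).indicator (fun y ↦ (affineBasis k p.2 y : ℂ)) x := by
      refine (eventually_all_finset _).2 fun p _ ↦ ?_
      filter_upwards [Lp.coeFn_smul (c p) (e p),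
        (memLp_indicator_affineBasis k p.1 p.2).coeFn_toLp] with x hsmul he
      rw [hsmul, Pi.smul_apply, he, smul_eq_mul]
    filter_upwards [coeFn_mulLp hα (affineProjLp n k F), coeFn_affineProjLp k F,
      coeFn_mulLp hα (∑ p ∈ s ×ˢ Finset.univ, c p • e p),
      Lp.coeFn_finsetSum (s ×ˢ Finset.univ) fun p ↦ c p • e p, hterm] with x hl hproj hr hsum hterm
    rw [hl, hr, hsum, hproj, Finset.sum_apply, Finset.sum_congr rfl hterm]
    by_cases hx : α x = 0
    · rw [hx, zero_mul, zero_mul]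
    · rw [affineProj_eq_sum_indicator (hs x hx)]
  rw [hexpand, map_sum]
  refine Submodule.sum_mem _ fun p hp ↦ ?_
  rw [map_smul]
  exact Submodule.smul_mem _ _ (Submodule.subset_span (Set.mem_image_of_mem _
    (by simpa using hp)))

lemma rank_mulLp_comp_affineProjLp_le {α : Bdy n → ℂ} (hα : MemLp α ⊤ volume) {k : ℕ}
    {s : Finset (Fin n → ℤ)} (hs : ∀ x, α x ≠ 0 → dyadicIndex k x ∈ s) :
    (mulLp hα ∘L affineProjLp n k).toLinearMap.rank ≤ ((s.card * (n + 1) : ℕ) : Cardinal) := by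
  classical
  let I : Finset ((Fin n → ℤ) × Option (Fin n)) := s ×ˢ Finset.univ
  let e (p : (Fin n → ℤ) × Option (Fin n)) : Hbd n :=
    mulLp hα (memLp_indicator_affineBasis k p.1 p.2).toLp
  have hcard : (I.image e).card ≤ s.card * (n + 1) := by
    simpa [I, Finset.card_product] using Finset.card_image_le (s := I) (f := e)
  refine ((Submodule.rank_mono ?_).trans (rank_span_finset_le (I.image e))).trans
    (by exact_mod_cast hcard)
  rintro _ ⟨F, rfl⟩
  rw [Finset.coe_image, Finset.coe_product, Finset.coe_univ]
  exact mulLp_affineProjLp_mem_span hα hs F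

/-- The indices of the dyadic cubes of side `2⁻ᵏ` that meet the cube `[-r, r]ⁿ`. -/
def dyadicBox (n k r : ℕ) : Finset (Fin n → ℤ) :=
  Fintype.piFinset fun _ ↦ Finset.Icc (-(r * 2 ^ k)) (r * 2 ^ k)

lemma dyadicIndex_mem_dyadicBox {k r : ℕ} {x : Bdy n} (hx : ∀ i, |x i| ≤ r) :
    dyadicIndex k x ∈ dyadicBox n k r := by
  refine Fintype.mem_piFinset.2 fun i ↦ Finset.mem_Icc.2 ⟨Int.le_floor.2 ?_, Int.floor_le_iff.2 ?_⟩
  all_goals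
    have := abs_le.1 (hx i)
    have : (0 : ℝ) < 2 ^ k := by positivity
    push_cast
    nlinarith

lemma card_dyadicBox_le (n k r : ℕ) : (dyadicBox n k r).card ≤ (2 * r + 1) ^ n * (2 ^ n) ^ k := by
  have hcard : ((r : ℤ) * 2 ^ k + 1 - -(r * 2 ^ k)).toNat = 2 * r * 2 ^ k + 1 := by
    rw [show (r : ℤ) * 2 ^ k + 1 - -(r * 2 ^ k) = (2 * r * 2 ^ k + 1 : ℕ) by push_cast; ring,
      Int.toNat_natCast]
  rw [dyadicBox, Fintype.card_piFinset]
  simp only [Int.card_Icc, hcard, Finset.prod_const, Finset.card_univ, Fintype.card_fin]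
  rw [pow_right_comm, ← mul_pow]
  gcongr
  linarith [Nat.one_le_two_pow (n := k)]

lemma exists_sNum_le_of_hasCompactSupport {E : Type*} [NormedAddCommGroup E]
    [InnerProductSpace ℂ E] {J : E →L[ℂ] Hbd n} {C : ℝ} (hn : 0 < n)
    (hJ : ∀ k, ‖J - affineProjLp n k ∘L J‖ ≤ C * (√8 ^ k)⁻¹) {α : Bdy n → ℂ}
    (hα : MemLp α ⊤ volume) (hsupp : HasCompactSupport α) :
    ∃ C' : ℝ, ∀ k : ℕ,
      sNum (mulLp hα ∘L J) k ≤ C' * ((k : ℝ) + 1) ^ (-(1 / (2 * (n : ℝ) / 3))) := by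
  obtain ⟨R, hR⟩ := hsupp.isCompact.isBounded.subset_closedBall 0
  obtain ⟨r, hRr⟩ := exists_nat_ge R
  have hbox (k : ℕ) (x : Bdy n) (hx : α x ≠ 0) : dyadicIndex k x ∈ dyadicBox n k r :=
    dyadicIndex_mem_dyadicBox fun i ↦ (PiLp.norm_apply_le x i).trans
      ((mem_closedBall_zero_iff.1 (hR (subset_tsupport α hx))).trans hRr)
  refine exists_sNum_le_rpow_of_geometric (c := (n + 1) * (2 * r + 1) ^ n) (N := 2 ^ n)
    (M := ‖mulLp hα‖ * C) (by positivity) (Nat.one_lt_two_pow hn.ne') (by positivity) fun k ↦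
    ⟨mulLp hα ∘L affineProjLp n k ∘L J, ?_, ?_⟩
  · calc (mulLp hα ∘L affineProjLp n k ∘L J).toLinearMap.rank
        ≤ (mulLp hα ∘L affineProjLp n k).toLinearMap.rank :=
          LinearMap.rank_comp_le_left J.toLinearMap (mulLp hα ∘L affineProjLp n k).toLinearMap
      _ ≤ (((dyadicBox n k r).card * (n + 1) : ℕ) : Cardinal) :=
          rank_mulLp_comp_affineProjLp_le hα (hbox k)
      _ ≤ (((n + 1) * (2 * r + 1) ^ n * (2 ^ n) ^ k : ℕ) : Cardinal) := by
          have := Nat.mul_le_mul_right (n + 1) (card_dyadicBox_le n k r)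
          exact_mod_cast this.trans_eq (by ring)
  · have hpow : (((2 ^ n : ℕ) : ℝ) ^ k) ^ (-(1 / (2 * (n : ℝ) / 3))) = (√8 ^ k)⁻¹ := by
      have : (0 : ℝ) < n := by exact_mod_cast hn
      rw [Nat.cast_pow, Nat.cast_ofNat, Real.rpow_neg (by positivity), inv_inj, ← pow_mul,
        ← Real.rpow_natCast, ← Real.rpow_mul zero_le_two, Real.sqrt_eq_rpow, ← Real.rpow_natCast,
        ← Real.rpow_mul (by norm_num), show (8 : ℝ) = 2 ^ (3 : ℝ) by norm_num,
        ← Real.rpow_mul zero_le_two]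
      congr 1
      push_cast
      field_simp
    rw [hpow, ← ContinuousLinearMap.comp_sub, mul_assoc]
    exact (ContinuousLinearMap.opNorm_comp_le _ _).trans (by gcongr; exact hJ k)

end CompactlySupportedMultiplier

section GeometricLevel

/-- The least `k` with `a ≤ t * b ^ k`, for `b > 1` and `a, t > 0`. -/
def geomLevel (b t a : ℝ) : ℕ := ⌈Real.logb b (a / t)⌉₊

variable {b t a p : ℝ}

lemma measurable_geomLevel (b t : ℝ) : Measurable (geomLevel b t) :=
  Nat.measurable_ceil.comp
    ((Real.measurable_log.comp (measurable_id.div_const t)).div_const (Real.log b))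

lemma le_mul_pow_geomLevel (hb : 1 < b) (ht : 0 < t) (ha : 0 < a) :
    a ≤ t * b ^ geomLevel b t a := by
  rw [← div_le_iff₀' ht, ← Real.rpow_natCast, ← Real.logb_le_iff_le_rpow hb (by positivity)]
  exact Nat.le_ceil _

lemma pow_geomLevel_le (hb : 1 < b) (ht : 0 < t) (hta : t ≤ a) :
    b ^ geomLevel b t a ≤ b * (a / t) := by
  have hat : 1 ≤ a / t := (one_le_div₀ ht).2 hta
  calc b ^ geomLevel b t a = b ^ (geomLevel b t a : ℝ) := (Real.rpow_natCast _ _).symm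
    _ ≤ b ^ (Real.logb b (a / t) + 1) :=
        Real.rpow_le_rpow_of_exponent_le hb.le (Nat.ceil_lt_add_one (Real.logb_nonneg hb hat)).le
    _ = b * (a / t) := by
        rw [Real.rpow_add_one (by positivity),
          Real.rpow_logb (by positivity) hb.ne' (by positivity), mul_comm]

lemma sq_mul_pow_geomLevel_rpow_le (hb : 1 < b) (ht : 0 < t) (hta : t ≤ a) (hp : 2 ≤ p) :
    a ^ 2 * (b ^ geomLevel b t a) ^ (p - 2) ≤ b ^ (p - 2) * t ^ (2 - p) * a ^ p := by
  have ha : 0 < a := ht.trans_le hta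
  calc a ^ 2 * (b ^ geomLevel b t a) ^ (p - 2) ≤ a ^ 2 * (b * (a / t)) ^ (p - 2) := by
        gcongr
        exact pow_geomLevel_le hb ht hta
    _ = b ^ (p - 2) * t ^ (2 - p) * (a ^ (2 : ℝ) * a ^ (p - 2)) := by
        rw [Real.mul_rpow (by positivity) (by positivity), Real.div_rpow ha.le ht.le,
          ← neg_sub p 2, Real.rpow_neg ht.le, Real.rpow_two]
        ring
    _ = b ^ (p - 2) * t ^ (2 - p) * a ^ p := by rw [← Real.rpow_add ha, add_sub_cancel]

end GeometricLevel

section TruncatedKernel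

variable {X : Type*} {E : Type*} [NormedAddCommGroup E] [NormedSpace ℂ E]
  {e : ℕ → X → StrongDual ℂ E} {α : X → ℂ} {b t : ℝ}

/-- The kernel that approximates multiplication by `α` composed with an operator approximated by
the operators with kernels `e k`. It takes `e k` with `t * b ^ k` comparable to `|α|` and vanishes
where `|α| ≤ t`. -/
def truncatedKernel (e : ℕ → X → StrongDual ℂ E) (α : X → ℂ) (b t : ℝ) (x : X) : StrongDual ℂ E :=
  if ‖α x‖ ≤ t then 0 else α x • e (geomLevel b t ‖α x‖) x

lemma measurable_truncatedKernel [MeasurableSpace X] (he : ∀ k u, Measurable fun x ↦ e k x u)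
    (hα : Measurable α) (u : E) : Measurable fun x ↦ truncatedKernel e α b t x u := by
  have heval : Measurable fun q : ℕ × X ↦ e q.1 q.2 u :=
    measurable_from_prod_countable_right fun k ↦ he k u
  have hlevel : Measurable fun x ↦ e (geomLevel b t ‖α x‖) x u :=
    heval.comp (((measurable_geomLevel b t).comp hα.norm).prodMk measurable_id)
  have happly : (fun x ↦ truncatedKernel e α b t x u) =
      fun x ↦ if ‖α x‖ ≤ t then 0 else α x * e (geomLevel b t ‖α x‖) x u := by
    funext x
    rw [truncatedKernel]
    split_ifs <;> rfl
  rw [happly]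
  exact measurable_const.ite (measurableSet_le hα.norm measurable_const) (hα.mul hlevel)

lemma enorm_truncatedKernel_sq_le {p L : ℝ} (hb : 1 < b) (ht : 0 < t) (hp : 2 ≤ p) (hL : 0 ≤ L)
    {x : X} (he : ∀ k, ‖e k x‖ ^ 2 ≤ L * (b ^ k) ^ (p - 2)) :
    ‖truncatedKernel e α b t x‖ₑ ^ 2 ≤
      ENNReal.ofReal (L * b ^ (p - 2) * t ^ (2 - p)) * ‖α x‖ₑ ^ p := by
  rw [truncatedKernel]
  split_ifs with hx
  · rw [← ofReal_norm, norm_zero, ENNReal.ofReal_zero, zero_pow two_ne_zero]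
    exact zero_le
  · rw [← ofReal_norm, ← ofReal_norm, ← ENNReal.ofReal_pow (norm_nonneg _),
      ENNReal.ofReal_rpow_of_nonneg (norm_nonneg _) (by positivity),
      ← ENNReal.ofReal_mul (by positivity), norm_smul, mul_pow]
    refine ENNReal.ofReal_le_ofReal ?_
    calc ‖α x‖ ^ 2 * ‖e (geomLevel b t ‖α x‖) x‖ ^ 2
        ≤ ‖α x‖ ^ 2 * (L * (b ^ geomLevel b t ‖α x‖) ^ (p - 2)) := by
          gcongr
          exact he _
      _ = L * (‖α x‖ ^ 2 * (b ^ geomLevel b t ‖α x‖) ^ (p - 2)) := by ring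
      _ ≤ L * (b ^ (p - 2) * t ^ (2 - p) * ‖α x‖ ^ p) := by
          exact mul_le_mul_of_nonneg_left
            (sq_mul_pow_geomLevel_rpow_le hb ht (not_le.1 hx).le hp) hL
      _ = L * b ^ (p - 2) * t ^ (2 - p) * ‖α x‖ ^ p := by ring

lemma enorm_mul_sub_truncatedKernel_sq_le (hb : 1 < b) (ht : 0 < t) (z : ℂ) (u : E) (x : X) :
    ‖α x * z - truncatedKernel e α b t x u‖ₑ ^ 2 ≤ ENNReal.ofReal t ^ 2 *
      (‖z‖ₑ ^ 2 + ∑' k, ENNReal.ofReal b ^ (2 * k) * ‖z - e k x u‖ₑ ^ 2) := by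
  rw [truncatedKernel]
  split_ifs with hx
  · rw [zero_apply, sub_zero, enorm_mul, mul_pow, ← ofReal_norm (α x)]
    gcongr
    exact le_self_add
  · set k := geomLevel b t ‖α x‖
    have hα : ‖α x‖ₑ ≤ ENNReal.ofReal t * ENNReal.ofReal b ^ k := by
      rw [← ofReal_norm, ← ENNReal.ofReal_pow (by positivity), ← ENNReal.ofReal_mul ht.le]
      exact ENNReal.ofReal_le_ofReal (le_mul_pow_geomLevel hb ht (ht.trans (not_le.1 hx)))
    calc ‖α x * z - α x • e k x u‖ₑ ^ 2 = ‖α x‖ₑ ^ 2 * ‖z - e k x u‖ₑ ^ 2 := by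
          rw [smul_eq_mul, ← mul_sub, enorm_mul, mul_pow]
      _ ≤ (ENNReal.ofReal t * ENNReal.ofReal b ^ k) ^ 2 * ‖z - e k x u‖ₑ ^ 2 := by gcongr
      _ = ENNReal.ofReal t ^ 2 * (ENNReal.ofReal b ^ (2 * k) * ‖z - e k x u‖ₑ ^ 2) := by ring
      _ ≤ _ := by
          gcongr
          exact (ENNReal.le_tsum (f := fun k ↦ ENNReal.ofReal b ^ (2 * k) * ‖z - e k x u‖ₑ ^ 2)
            k).trans le_add_self

variable [MeasurableSpace X] {μ : Measure X}

lemma lintegral_mul_sub_truncatedKernel_sq_le {J : E →L[ℂ] Lp ℂ 2 μ} {C : ℝ} (hb : 1 < b)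
    (ht : 0 < t) (hC : 0 ≤ C) (he : ∀ k u, Measurable fun x ↦ e k x u)
    (happrox : ∀ u, ∑' k, ENNReal.ofReal b ^ (2 * k) * ∫⁻ x, ‖J u x - e k x u‖ₑ ^ 2 ∂μ ≤
      ENNReal.ofReal ((C * ‖u‖) ^ 2)) (u : E) :
    ∫⁻ x, ‖α x * J u x - truncatedKernel e α b t x u‖ₑ ^ 2 ∂μ ≤
      ENNReal.ofReal ((t * (‖J‖ + C) * ‖u‖) ^ 2) := by
  have hJu : AEStronglyMeasurable (J u) μ := Lp.aestronglyMeasurable _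
  have hterm (k : ℕ) :
      AEMeasurable (fun x ↦ ENNReal.ofReal b ^ (2 * k) * ‖J u x - e k x u‖ₑ ^ 2) μ :=
    ((hJu.sub (he k u).aestronglyMeasurable).enorm.pow_const 2).const_mul _
  calc ∫⁻ x, ‖α x * J u x - truncatedKernel e α b t x u‖ₑ ^ 2 ∂μ
      ≤ ∫⁻ x, ENNReal.ofReal t ^ 2 * (‖J u x‖ₑ ^ 2 +
          ∑' k, ENNReal.ofReal b ^ (2 * k) * ‖J u x - e k x u‖ₑ ^ 2) ∂μ :=
        lintegral_mono fun x ↦ enorm_mul_sub_truncatedKernel_sq_le hb ht (J u x) u x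
    _ = ENNReal.ofReal t ^ 2 * (∫⁻ x, ‖J u x‖ₑ ^ 2 ∂μ +
          ∑' k, ENNReal.ofReal b ^ (2 * k) * ∫⁻ x, ‖J u x - e k x u‖ₑ ^ 2 ∂μ) := by
        rw [lintegral_const_mul' _ _ (by finiteness),
          lintegral_add_left' (hJu.enorm.pow_const 2), lintegral_tsum hterm]
        congr 3 with k
        exact lintegral_const_mul' _ _ (by finiteness)
    _ ≤ ENNReal.ofReal t ^ 2 * (ENNReal.ofReal ((‖J‖ * ‖u‖) ^ 2) +
          ENNReal.ofReal ((C * ‖u‖) ^ 2)) := by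
        gcongr
        · rw [lintegral_enorm_sq_eq_norm_sq (ae_eq_refl (J u))]
          gcongr
          exact J.le_opNorm u
        · exact happrox u
    _ = ENNReal.ofReal (t ^ 2 * ((‖J‖ * ‖u‖) ^ 2 + (C * ‖u‖) ^ 2)) := by
        rw [ENNReal.ofReal_mul (by positivity), ENNReal.ofReal_pow ht.le,
          ENNReal.ofReal_add (by positivity) (by positivity)]
    _ ≤ ENNReal.ofReal ((t * (‖J‖ + C) * ‖u‖) ^ 2) := by
        rw [mul_assoc t, mul_pow t, add_mul]
        gcongr
        exact pow_add_pow_le (by positivity) (by positivity) two_ne_zero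

end TruncatedKernel

section IntegrableMultiplier

variable {X : Type*} [MeasurableSpace X] {μ : Measure X} {E : Type*} [NormedAddCommGroup E]
  [InnerProductSpace ℂ E] [CompleteSpace E] {e : ℕ → X → StrongDual ℂ E} {α : X → ℂ}
  {b p t L C : ℝ} {J T : E →L[ℂ] Lp ℂ 2 μ}

lemma sNum_le_add_sqrt_of_kernels (hb : 1 < b) (ht : 0 < t) (hp : 2 ≤ p) (hL : 0 ≤ L) (hC : 0 ≤ C)
    (he : ∀ k u, Measurable fun x ↦ e k x u) (hnorm : ∀ k x, ‖e k x‖ ^ 2 ≤ L * (b ^ k) ^ (p - 2))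
    (happrox : ∀ u, ∑' k, ENNReal.ofReal b ^ (2 * k) * ∫⁻ x, ‖J u x - e k x u‖ₑ ^ 2 ∂μ ≤
      ENNReal.ofReal ((C * ‖u‖) ^ 2))
    (hα : Measurable α) {I : ℝ} (hI : ∫⁻ x, ‖α x‖ₑ ^ p ∂μ = ENNReal.ofReal I) (hI0 : 0 ≤ I)
    (hT : ∀ u, T u =ᵐ[μ] fun x ↦ α x * J u x) (m : ℕ) :
    sNum T m ≤ t * (‖J‖ + C) + √(L * b ^ (p - 2) * t ^ (2 - p) * I / (m + 1)) := by
  have hmeas (u : E) : AEStronglyMeasurable (fun x ↦ truncatedKernel e α b t x u) μ :=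
    (measurable_truncatedKernel he hα u).aestronglyMeasurable
  obtain ⟨A, hA, hHS⟩ := exists_hilbertSchmidtSqLE_ae_eq_apply (truncatedKernel e α b t) hmeas
    (S := L * b ^ (p - 2) * t ^ (2 - p) * I) (by positivity) <| by
      calc ∫⁻ x, ‖truncatedKernel e α b t x‖ₑ ^ 2 ∂μ
          ≤ ∫⁻ x, ENNReal.ofReal (L * b ^ (p - 2) * t ^ (2 - p)) * ‖α x‖ₑ ^ p ∂μ :=
            lintegral_mono fun x ↦ enorm_truncatedKernel_sq_le hb ht hp hL fun k ↦ hnorm k x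
        _ = ENNReal.ofReal (L * b ^ (p - 2) * t ^ (2 - p) * I) := by
            rw [lintegral_const_mul' _ _ (by finiteness), hI,
              ← ENNReal.ofReal_mul (by positivity)]
  have hTA : ‖T - A‖ ≤ t * (‖J‖ + C) := by
    refine ContinuousLinearMap.opNorm_le_bound _ (by positivity) fun u ↦ ?_
    refine norm_le_of_lintegral_enorm_sq_le (by positivity) ?_
      (lintegral_mul_sub_truncatedKernel_sq_le (α := α) hb ht hC he happrox u)
    filter_upwards [Lp.coeFn_sub (T u) (A u), hT u, hA u] with x hsub hTu hAu
    rw [sub_apply, hsub, Pi.sub_apply, hTu, hAu]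
  obtain ⟨F, hF, hAF⟩ := hHS.exists_rank_le_norm_sub_le m
  calc sNum T m ≤ ‖T - F‖ := sNum_le_norm_sub hF
    _ ≤ ‖T - A‖ + ‖A - F‖ := norm_sub_le_norm_sub_add_norm_sub T A F
    _ ≤ _ := add_le_add hTA hAF

/-- Splitting `α` at height `(m + 1) ^ (-1 / p)` balances the norm of the remainder against the
Hilbert–Schmidt norm of the truncation. -/
lemma exists_sNum_le_of_kernels (hb : 1 < b) (hp : 2 ≤ p) (hL : 0 ≤ L) (hC : 0 ≤ C)
    (he : ∀ k u, Measurable fun x ↦ e k x u) (hnorm : ∀ k x, ‖e k x‖ ^ 2 ≤ L * (b ^ k) ^ (p - 2))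
    (happrox : ∀ u, ∑' k, ENNReal.ofReal b ^ (2 * k) * ∫⁻ x, ‖J u x - e k x u‖ₑ ^ 2 ∂μ ≤
      ENNReal.ofReal ((C * ‖u‖) ^ 2))
    (hα : MemLp α (ENNReal.ofReal p) μ) (hT : ∀ u, T u =ᵐ[μ] fun x ↦ α x * J u x) :
    ∃ C' : ℝ, ∀ m : ℕ, sNum T m ≤ C' * ((m : ℝ) + 1) ^ (-(1 / p)) := by
  have hp0 : 0 < p := by positivity
  set a := hα.1.mk α
  have hαa : α =ᵐ[μ] a := hα.1.ae_eq_mk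
  have hint : ∫⁻ x, ‖a x‖ₑ ^ p ∂μ < ⊤ := by
    have h := lintegral_rpow_enorm_lt_top_of_eLpNorm_lt_top (ENNReal.ofReal_pos.2 hp0).ne'
      ENNReal.ofReal_ne_top ((memLp_congr_ae hαa).1 hα).2
    rwa [ENNReal.toReal_ofReal hp0.le] at h
  set I := (∫⁻ x, ‖a x‖ₑ ^ p ∂μ).toReal
  have hTa (u : E) : T u =ᵐ[μ] fun x ↦ a x * J u x := by
    filter_upwards [hT u, hαa] with x hx hax
    rw [hx, hax]
  refine ⟨‖J‖ + C + √(L * b ^ (p - 2) * I), fun m ↦ ?_⟩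
  have hm : (0 : ℝ) < m + 1 := by positivity
  set t : ℝ := ((m : ℝ) + 1) ^ (-(1 / p))
  have ht : 0 < t := by positivity
  have htp : t ^ p = ((m : ℝ) + 1)⁻¹ := by
    rw [← Real.rpow_mul hm.le, neg_mul, one_div_mul_cancel hp0.ne', Real.rpow_neg_one]
  calc sNum T m ≤ t * (‖J‖ + C) + √(L * b ^ (p - 2) * t ^ (2 - p) * I / (m + 1)) :=
        sNum_le_add_sqrt_of_kernels hb ht hp hL hC he hnorm happrox
          hα.1.stronglyMeasurable_mk.measurable (ENNReal.ofReal_toReal hint.ne).symm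
          ENNReal.toReal_nonneg hTa m
    _ = t * (‖J‖ + C) + √(L * b ^ (p - 2) * I * t ^ 2) := by
        rw [div_eq_mul_inv, ← htp, show (t ^ 2 : ℝ) = t ^ (2 - p) * t ^ p by
          rw [← Real.rpow_add ht, sub_add_cancel, Real.rpow_two]]
        ring_nf
    _ = (‖J‖ + C + √(L * b ^ (p - 2) * I)) * t := by
        rw [Real.sqrt_mul (by positivity), Real.sqrt_sq ht.le]
        ring

end IntegrableMultiplier

section KernelGrowth

lemma le_mul_pow_of_succ_le_add_mul_pow {a : ℕ → ℝ} {M q : ℝ} (hM : 0 ≤ M) (hq : 1 < q)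
    (ha : 0 ≤ a 0) (h : ∀ k, a (k + 1) ≤ a k + M * q ^ k) (k : ℕ) :
    a k ≤ (a 0 + M / (q - 1)) * q ^ k := by
  have hq' : 0 < q - 1 := sub_pos.2 hq
  induction k with
  | zero =>
    rw [pow_zero, mul_one, le_add_iff_nonneg_right]
    positivity
  | succ k ih =>
    have hstep : M * q ^ k = M / (q - 1) * (q - 1) * q ^ k := by
      rw [div_mul_cancel₀ _ hq'.ne']
    have hgrow : 0 ≤ a 0 * ((q - 1) * q ^ k) := by positivity
    rw [pow_succ]
    nlinarith [h k]

variable {n : ℕ} {E : Type*} [NormedAddCommGroup E] [NormedSpace ℂ E]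

lemma sqrt_eight : √8 = √2 ^ 3 := by
  rw [pow_succ, Real.sq_sqrt zero_le_two, show (8 : ℝ) = 2 ^ 2 * 2 by norm_num,
    Real.sqrt_mul (by positivity), Real.sqrt_sq zero_le_two]

lemma norm_affineProjEval_succ_comp_le {J : E →L[ℂ] Hbd n} {C : ℝ} (hn : 3 ≤ n)
    (hJ : ∀ k, ‖J - affineProjLp n k ∘L J‖ ≤ C * (√8 ^ k)⁻¹) (k : ℕ) (x : Bdy n) :
    ‖affineProjEval (k + 1) x ∘L J‖ ≤ ‖affineProjEval k x ∘L J‖ +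
      4 * (n + 1) * √2 ^ n * C * (√2 ^ (n - 3)) ^ k := by
  have hsplit : affineProjEval (k + 1) x ∘L J = affineProjEval k x ∘L J +
      affineProjEval (k + 1) x ∘L (J - affineProjLp n k ∘L J) := by
    conv_lhs => rw [affineProjEval_succ]
    rfl
  have hpow : √2 ^ ((k + 1) * n) * (√8 ^ k)⁻¹ = √2 ^ n * (√2 ^ (n - 3)) ^ k := by
    rw [mul_inv_eq_iff_eq_mul₀ (by positivity), mul_assoc, ← mul_pow, sqrt_eight,
      pow_sub_mul_pow _ hn]
    ring
  calc ‖affineProjEval (k + 1) x ∘L J‖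
      ≤ ‖affineProjEval k x ∘L J‖ +
          ‖affineProjEval (k + 1) x‖ * ‖J - affineProjLp n k ∘L J‖ := by
        rw [hsplit]
        exact (norm_add_le _ _).trans (by gcongr; exact ContinuousLinearMap.opNorm_comp_le _ _)
    _ ≤ ‖affineProjEval k x ∘L J‖ + 4 * (n + 1) * √2 ^ ((k + 1) * n) * (C * (√8 ^ k)⁻¹) := by
        gcongr
        · exact norm_affineProjEval_le (k + 1) x
        · exact hJ k
    _ = ‖affineProjEval k x ∘L J‖ + 4 * (n + 1) * C * (√2 ^ ((k + 1) * n) * (√8 ^ k)⁻¹) := by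
        ring
    _ = _ := by rw [hpow]; ring

lemma norm_affineProjEval_comp_le {J : E →L[ℂ] Hbd n} {C : ℝ} (hn : 3 < n) (hC : 0 ≤ C)
    (hJ : ∀ k, ‖J - affineProjLp n k ∘L J‖ ≤ C * (√8 ^ k)⁻¹) (k : ℕ) (x : Bdy n) :
    ‖affineProjEval k x ∘L J‖ ≤
      (4 * (n + 1) * ‖J‖ + 4 * (n + 1) * √2 ^ n * C / (√2 ^ (n - 3) - 1)) * (√2 ^ (n - 3)) ^ k := by
  have hsqrt2 : 1 < √2 := by rw [Real.lt_sqrt zero_le_one]; norm_num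
  have hq : 1 < √2 ^ (n - 3) := one_lt_pow₀ hsqrt2 (by omega)
  refine (le_mul_pow_of_succ_le_add_mul_pow (a := fun k ↦ ‖affineProjEval k x ∘L J‖)
    (by positivity) hq (norm_nonneg _)
    (fun k ↦ norm_affineProjEval_succ_comp_le hn.le hJ k x) k).trans ?_
  gcongr
  calc ‖affineProjEval 0 x ∘L J‖ ≤ ‖affineProjEval 0 x‖ * ‖J‖ :=
        ContinuousLinearMap.opNorm_comp_le _ _
    _ ≤ 4 * (n + 1) * ‖J‖ := by
        gcongr
        simpa using norm_affineProjEval_le 0 x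

lemma exists_sNum_le_of_memLp {E : Type*} [NormedAddCommGroup E] [InnerProductSpace ℂ E]
    [CompleteSpace E] {J T : E →L[ℂ] Hbd n} {C : ℝ} (hn : 3 < n) (hC : 0 ≤ C)
    (hJ : ∀ u, ∑' k : ℕ, 8 ^ k * ‖J u - affineProjLp n k (J u)‖ₑ ^ 2 ≤
      ENNReal.ofReal ((C * ‖u‖) ^ 2)) {α : Bdy n → ℂ}
    (hα : MemLp α (ENNReal.ofReal (2 * (n : ℝ) / 3)) volume)
    (hT : ∀ u, T u =ᵐ[volume] fun x ↦ α x * J u x) :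
    ∃ C' : ℝ, ∀ k : ℕ, sNum T k ≤ C' * ((k : ℝ) + 1) ^ (-(1 / (2 * (n : ℝ) / 3))) := by
  have hn' : (3 : ℝ) < n := by exact_mod_cast hn
  set M := 4 * (n + 1) * ‖J‖ + 4 * (n + 1) * √2 ^ n * C / (√2 ^ (n - 3) - 1)
  refine exists_sNum_le_of_kernels (e := fun k x ↦ affineProjEval k x ∘L J) (b := √8) (L := M ^ 2)
    (by rw [Real.lt_sqrt zero_le_one]; norm_num) (by linarith) (sq_nonneg M) hC
    (fun k u ↦ measurable_affineProj k (J u)) (fun k x ↦ ?_) (fun u ↦ ?_) hα hT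
  · have hpow : (√8 ^ k) ^ (2 * (n : ℝ) / 3 - 2) = ((√2 ^ (n - 3)) ^ k) ^ 2 := by
      rw [sqrt_eight]
      simp only [← Real.rpow_natCast]
      rw [← Real.rpow_mul (by positivity), ← Real.rpow_mul (by positivity),
        ← Real.rpow_mul (by positivity), ← Real.rpow_mul (by positivity)]
      congr 1
      push_cast [Nat.cast_sub hn.le]
      ring
    rw [hpow, ← mul_pow]
    gcongr
    exact norm_affineProjEval_comp_le hn hC (norm_sub_affineProjLp_comp_le hC hJ) k x
  · refine (tsum_congr fun k ↦ ?_).trans_le (hJ u)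
    have hdiff : J u - affineProjLp n k (J u) =ᵐ[volume] fun x ↦ J u x - affineProj k (J u) x := by
      filter_upwards [Lp.coeFn_sub (J u) (affineProjLp n k (J u)), coeFn_affineProjLp k (J u)]
        with x hsub hproj
      rw [hsub, Pi.sub_apply, hproj]
    rw [pow_mul, ← ENNReal.ofReal_pow (Real.sqrt_nonneg 8), Real.sq_sqrt (by norm_num),
      ENNReal.ofReal_ofNat]
    simp only [ContinuousLinearMap.comp_apply, affineProjEval_apply]
    rw [lintegral_enorm_sq_eq_norm_sq hdiff, ENNReal.ofReal_pow (norm_nonneg _), ofReal_norm]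

end KernelGrowth

theorem statement5_general (n : ℕ) (hn : 1 ≤ n) {K : Type*} [NormedAddCommGroup K]
    [InnerProductSpace ℂ K] [CompleteSpace K] (K₀ : K →L[ℂ] Hbd n)
    (hran : ∀ u : K, ∃ f : Bdy n → ℂ, ⇑(K₀ u) =ᵐ[volume] f ∧ MemH32B n f) (α : Bdy n → ℂ)
    (hα : (HasCompactSupport α ∧ MemLp α ⊤ volume) ∨
      (3 < n ∧ MemLp α (ENNReal.ofReal (2 * (n : ℝ) / 3)) volume))
    (T : K →L[ℂ] Hbd n) (hT : ∀ u : K, ⇑(T u) =ᵐ[volume] fun y => α y * (K₀ u) y) :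
    MemWeakSchatten (2 * (n : ℝ) / 3) T := by
  obtain ⟨C, hC, hsum⟩ := exists_tsum_enorm_sub_affineProjLp_sq_le K₀ hran
  suffices ∃ C', ∀ k : ℕ, sNum T k ≤ C' * ((k : ℝ) + 1) ^ (-(1 / (2 * (n : ℝ) / 3))) by
    obtain ⟨C', hC'⟩ := this
    exact memWeakSchatten_of_sNum_le (by positivity) hC'
  rcases hα with ⟨hsupp, hbdd⟩ | ⟨hn3, hLp⟩
  · have hTα : T = mulLp hbdd ∘L K₀ := by
      ext u
      filter_upwards [hT u, coeFn_mulLp hbdd (K₀ u)] with y hTu hmul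
      rw [hTu, ContinuousLinearMap.comp_apply, hmul]
    rw [hTα]
    exact exists_sNum_le_of_hasCompactSupport hn (norm_sub_affineProjLp_comp_le hC hsum) hbdd hsupp
  · exact exists_sNum_le_of_memLp hn3 hC hsum hLp hT

theorem statement5 (n : ℕ) (hn : 1 ≤ n) (K : Type) [NormedAddCommGroup K]
    [InnerProductSpace ℂ K] [CompleteSpace K] (K₀ : K →L[ℂ] Hbd n)
    (hran : ∀ u : K, ∃ f : Bdy n → ℂ, ⇑(K₀ u) =ᵐ[(volume : Measure (Bdy n))] f ∧ MemH32B n f)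
    (α : Bdy n → ℂ) (hα : MemLp α ⊤ (volume : Measure (Bdy n)))
    (hcase : HasCompactSupport α ∨
      (3 < n ∧ MemLp α (ENNReal.ofReal (2 * (n : ℝ) / 3)) (volume : Measure (Bdy n))))
    (T : K →L[ℂ] Hbd n)
    (hT : ∀ u : K, ⇑(T u) =ᵐ[(volume : Measure (Bdy n))] fun y => α y * (K₀ u) y) :
    MemWeakSchatten (2 * (n : ℝ) / 3) T :=
  statement5_general n hn K₀ hran α (hcase.imp_left fun hsupp ↦ ⟨hsupp, hα⟩) T hT

end RobinHS
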